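/- arXiv:2507.20274 — 4 statements merged into one kernel-verified Lean document; each statement's English description precedes it below -/
import Mathlib

section
/- Convolution estimate for tail functions (Lemma 4.3): There exists a constant C_d > 0, depending only on d, such that for every integer L ≥ 2 and all 0 ≤ u ≤ t < 1 satisfying either (i) 1−u ≥ 1−t ≥ L^{-2}, or (ii) L^{-d} ≤ 1−t ≤ 1−u ≤ L^{-2}, and for all a, b ∈ ℤ_L^d: Σ_{c∈ℤ_L^d} T_u(|a−c|)·T_t(|c−b|) ≤ (C_d/(1−u)) · T_t(|a−b|). -/
/-- Periodic L¹ distance on the discrete torus `(ZMod n)^d`. -/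
def torusDist {n d : ℕ} (x y : Fin d → ZMod n) : ℕ :=
  ∑ i, min (x i - y i).val (y i - x i).val

/-- The diffusion length scale `ℓ_t := min((1−t)^{−1/2}, L)`. -/
noncomputable def ellT (L : ℕ) (t : ℝ) : ℝ := min ((1 - t) ^ (-(1 / 2 : ℝ))) (L : ℝ)

/-- The tail function `T_t(r) := (1/(r^{d−2}+1) + 1/(L^d(1−t)))·exp(−(r/ℓ_t)^{1/2})`. -/
noncomputable def tailT (d L : ℕ) (t r : ℝ) : ℝ :=
  ((r ^ (d - 2) + 1)⁻¹ + ((L : ℝ) ^ d * (1 - t))⁻¹) *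
    Real.exp (-((r / ellT L t) ^ ((1 : ℝ) / 2)))

/-!
By the triangle inequality one of `|a - c|`, `|c - b|` is at least `|a - b| / 2`; let `z` be the
smaller of the two. The product of the profiles `1 / (r ^ (d - 2) + 1)` at `|a - c|` and `|c - b|`
is then at most a constant times their product at `z` and `|a - b|`. As `ℓ_u ≤ ℓ_t`, concavity of
the square root leaves a surplus in the exponent:
`√(|a - c| / ℓ_u) + √(|c - b| / ℓ_t) ≥ √(|a - b| / ℓ_t) + √(z / ℓ_u) / 2`.
Hence each term of the convolution is at most `T_t(|a - b|)` times the sum of the zero mode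
`1 / (L ^ d (1 - u))` and a constant multiple of `exp (-√(z / ℓ_u) / 2) / (z ^ (d - 2) + 1)`. Since
spheres of radius `k` have `O(k ^ (d - 1))` points, the latter sums to `O(ℓ_u ^ 2)`, which, like the
sum of the zero modes, is `O(1 / (1 - u))`.
-/

section TorusDist

open Finset

theorem torusDist_comm {n d : ℕ} (x y : Fin d → ZMod n) : torusDist x y = torusDist y x :=
  sum_congr rfl fun _ _ ↦ min_comm _ _

theorem torusDist_eq_sum_natAbs_valMinAbs {n d : ℕ} [NeZero n] (x y : Fin d → ZMod n) :
    torusDist x y = ∑ i, (x i - y i).valMinAbs.natAbs := by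
  refine sum_congr rfl fun i _ ↦ ?_
  rw [ZMod.valMinAbs_natAbs_eq_min, ← neg_sub (x i) (y i), ZMod.neg_val]
  split_ifs with h
  · simp [h]
  · rfl

theorem torusDist_triangle {n d : ℕ} [NeZero n] (x y z : Fin d → ZMod n) :
    torusDist x z ≤ torusDist x y + torusDist y z := by
  simp only [torusDist_eq_sum_natAbs_valMinAbs, ← sum_add_distrib]
  refine sum_le_sum fun i _ ↦ ?_
  have h := ZMod.natAbs_valMinAbs_add_le (x i - y i) (y i - z i)
  rw [sub_add_sub_cancel] at h
  exact h.trans (Int.natAbs_add_le _ _)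

-- All coordinates but the first lie in `[-k, k]`; they determine the first one up to its sign.
theorem card_le_of_forall_sum_natAbs_eq {n k : ℕ} {S : Finset (Fin (n + 1) → ℤ)}
    (hS : ∀ v ∈ S, ∑ i, (v i).natAbs = k) : #S ≤ 2 * (2 * k + 1) ^ n := by
  let box := Fintype.piFinset fun _ : Fin n ↦ Icc (-(k : ℤ)) k
  have hbox : #(box ×ˢ (univ : Finset Bool)) = 2 * (2 * k + 1) ^ n := by
    have hside : #(Icc (-(k : ℤ)) k) = 2 * k + 1 := by rw [Int.card_Icc]; omega
    rw [card_product, Fintype.card_piFinset_const, hside, card_univ, Fintype.card_bool, mul_comm]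
  rw [← hbox]
  refine card_le_card_of_injOn (fun v ↦ (Fin.tail v, decide (0 ≤ v 0))) ?_ ?_
  · intro v hv
    have hsum := hS v hv
    rw [Fin.sum_univ_succ] at hsum
    simp only [box, coe_product, Set.mem_prod, mem_coe, Fintype.mem_piFinset, mem_Icc, mem_univ,
      and_true]
    intro i
    have hi := single_le_sum (f := fun i : Fin n ↦ (v i.succ).natAbs)
      (fun _ _ ↦ Nat.zero_le _) (mem_univ i)
    simp only [Fin.tail]
    omega
  · intro v hv w hw hvw
    obtain ⟨htail, hsign⟩ := Prod.mk.inj hvw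
    have hsucc (i : Fin n) : v i.succ = w i.succ := congrFun htail i
    have hv_sum := hS v hv
    have hw_sum := hS w hw
    rw [Fin.sum_univ_succ] at hv_sum hw_sum
    simp only [hsucc] at hv_sum
    rw [decide_eq_decide] at hsign
    have hzero : v 0 = w 0 := by omega
    exact funext (Fin.cases hzero hsucc)

theorem card_torusDist_eq_le {L n : ℕ} [NeZero L] (a : Fin (n + 1) → ZMod L) (k : ℕ) :
    #{c | torusDist a c = k} ≤ 2 * (2 * k + 1) ^ n := by
  let lift (c : Fin (n + 1) → ZMod L) : Fin (n + 1) → ℤ := fun i ↦ (a i - c i).valMinAbs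
  have lift_injective : Function.Injective lift := fun c c' h ↦ funext fun i ↦
    sub_right_injective (ZMod.injective_valMinAbs (congrFun h i))
  rw [← card_image_of_injective _ lift_injective]
  refine card_le_of_forall_sum_natAbs_eq fun v hv ↦ ?_
  obtain ⟨c, hc, rfl⟩ := mem_image.1 hv
  rw [← (mem_filter.1 hc).2, torusDist_eq_sum_natAbs_valMinAbs]

theorem sum_comp_torusDist_le {L n : ℕ} [NeZero L] {g : ℕ → ℝ} (hg : ∀ k, 0 ≤ g k)
    (a : Fin (n + 1) → ZMod L) :
    ∑ c, g (torusDist a c) ≤ ∑ k ∈ univ.image (torusDist a), 2 * (2 * (k : ℝ) + 1) ^ n * g k := by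
  rw [sum_comp]
  refine sum_le_sum fun k _ ↦ ?_
  rw [nsmul_eq_mul]
  refine mul_le_mul_of_nonneg_right ?_ (hg k)
  exact_mod_cast card_torusDist_eq_le a k

end TorusDist

section RealInequalities

open Real

theorem sqrt_add_add_half_sqrt_min_le {x y : ℝ} (hx : 0 ≤ x) (hy : 0 ≤ y) :
    √(x + y) + √(min x y) / 2 ≤ √x + √y := by
  wlog hxy : x ≤ y generalizing x y
  · simpa only [add_comm, min_comm] using this hy hx (le_of_not_ge hxy)
  rw [min_eq_left hxy]
  suffices h : √(x + y) ≤ √x / 2 + √y by linarith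
  refine sqrt_le_iff.2 ⟨by positivity, ?_⟩
  have hmul : √x * √x ≤ √x * √y := by gcongr
  nlinarith [sq_sqrt hx, sq_sqrt hy]

theorem sqrt_div_add_half_sqrt_min_div_le {x y r l m : ℝ} (hx : 0 ≤ x) (hy : 0 ≤ y)
    (hr : r ≤ x + y) (hl : 0 < l) (hlm : l ≤ m) :
    √(r / m) + √(min x y / l) / 2 ≤ √(x / l) + √(y / m) := by
  have hm : 0 < m := hl.trans_le hlm
  have hsplit : √r + √(min x y) / 2 ≤ √x + √y :=
    (add_le_add_left (sqrt_le_sqrt hr) _).trans (sqrt_add_add_half_sqrt_min_le hx hy)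
  have hmin : √(min x y) / 2 ≤ √x :=
    (half_le_self (sqrt_nonneg _)).trans (sqrt_le_sqrt (min_le_left x y))
  have hscale : (√m)⁻¹ ≤ (√l)⁻¹ := inv_anti₀ (sqrt_pos.2 hl) (sqrt_le_sqrt hlm)
  simp only [sqrt_div' _ hm.le, sqrt_div' _ hl.le, div_eq_mul_inv _ (√m), div_eq_mul_inv _ (√l)]
  linarith [mul_le_mul_of_nonneg_right hsplit (inv_nonneg.2 (sqrt_nonneg m)),
    mul_le_mul_of_nonneg_right hmin (sub_nonneg.2 hscale)]

theorem exp_neg_half_sqrt_le {s : ℝ} (hs : 0 ≤ s) (n : ℕ) :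
    exp (-(√s / 2)) ≤ 4 ^ n * (2 * n).factorial * exp 1 / (1 + s) ^ n := by
  have hbase : 1 + s ≤ 4 * (1 + √s / 2) ^ 2 := by nlinarith [sq_sqrt hs, sqrt_nonneg s]
  have hexp : (1 + √s / 2) ^ (2 * n) ≤ (2 * n).factorial * exp (1 + √s / 2) :=
    (div_le_iff₀' (by positivity)).1 (pow_div_factorial_le_exp _ (by positivity) _)
  rw [le_div_iff₀ (by positivity), exp_neg, inv_mul_le_iff₀ (exp_pos _)]
  calc (1 + s) ^ n ≤ (4 * (1 + √s / 2) ^ 2) ^ n := by gcongr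
    _ = 4 ^ n * (1 + √s / 2) ^ (2 * n) := by rw [mul_pow, pow_mul]
    _ ≤ 4 ^ n * ((2 * n).factorial * exp (1 + √s / 2)) := by gcongr
    _ = exp (√s / 2) * (4 ^ n * (2 * n).factorial * exp 1) := by rw [exp_add]; ring

theorem sum_inv_add_sq_le {l : ℝ} (hl : 1 ≤ l) (S : Finset ℕ) :
    ∑ k ∈ S, ((l + k) ^ 2)⁻¹ ≤ 2 / l := by
  have hterm (k : ℕ) : ((l + k) ^ 2)⁻¹ ≤ 2 / (l + k) - 2 / (l + (k + 1 : ℕ)) := by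
    have : 1 ≤ l + k := le_add_of_le_of_nonneg hl k.cast_nonneg
    push_cast
    rw [← add_assoc, div_sub_div _ _ (by positivity) (by positivity), inv_eq_one_div,
      div_le_div_iff₀ (by positivity) (by positivity)]
    nlinarith
  let N := S.sup id + 1
  calc ∑ k ∈ S, ((l + k) ^ 2)⁻¹
      ≤ ∑ k ∈ Finset.range N, ((l + k) ^ 2)⁻¹ :=
        Finset.sum_le_sum_of_subset_of_nonneg S.subset_range_sup_succ fun _ _ _ ↦ by positivity
    _ ≤ ∑ k ∈ Finset.range N, (2 / (l + k) - 2 / (l + (k + 1 : ℕ))) :=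
        Finset.sum_le_sum fun k _ ↦ hterm k
    _ = 2 / l - 2 / (l + N) := by
        rw [Finset.sum_range_sub' (fun k : ℕ ↦ 2 / (l + k)), Nat.cast_zero, add_zero]
    _ ≤ 2 / l := sub_le_self _ (by positivity)

end RealInequalities

section TailKernel

open Real

/-- The bounded version `1 / (r ^ p + 1)` of the decay `r ^ (-p)` of the Green's function of the
Laplacian in dimension `p + 2`. -/
noncomputable def greenProfile (p : ℕ) (r : ℝ) : ℝ := (r ^ p + 1)⁻¹

/-- The Green's function profile damped at scale `l`. The rate is half that of `tailKernel`, the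
other half having been spent on the decay in the distance between the two endpoints. -/
noncomputable def dampedGreen (p : ℕ) (l r : ℝ) : ℝ := greenProfile p r * exp (-(√(r / l) / 2))

/-- The tail function with its length scale `l` and its zero mode `A` as free parameters;
in dimension `p + 2`, `T_t` is the case `A = 1 / (L ^ (p + 2) (1 - t))` and `l = ℓ_t`. -/
noncomputable def tailKernel (p : ℕ) (A l r : ℝ) : ℝ := (greenProfile p r + A) * exp (-√(r / l))

variable {p : ℕ} {x y r l m A B : ℝ}

theorem greenProfile_nonneg (hr : 0 ≤ r) : 0 ≤ greenProfile p r := by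
  unfold greenProfile; positivity

theorem greenProfile_le_of_le (hx : 0 ≤ x) (hxy : x ≤ y) :
    greenProfile p y ≤ greenProfile p x := by
  unfold greenProfile; gcongr

theorem greenProfile_le_two_pow_mul (hr : 0 ≤ r) (hx : 0 ≤ x) (hrx : r ≤ 2 * x) :
    greenProfile p x ≤ 2 ^ p * greenProfile p r := by
  have hpow : r ^ p + 1 ≤ 2 ^ p * (x ^ p + 1) := by
    have hone : (1 : ℝ) ≤ 2 ^ p := one_le_pow₀ one_le_two
    calc r ^ p + 1 ≤ (2 * x) ^ p + 2 ^ p := by gcongr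
      _ = 2 ^ p * (x ^ p + 1) := by rw [mul_pow]; ring
  unfold greenProfile
  rwa [← div_eq_mul_inv, inv_eq_one_div, div_le_div_iff₀ (by positivity) (by positivity), one_mul]

theorem greenProfile_mul_le (hx : 0 ≤ x) (hy : 0 ≤ y) (hr : 0 ≤ r) (hrxy : r ≤ x + y) :
    greenProfile p x * greenProfile p y ≤
      2 ^ p * greenProfile p r * greenProfile p (min x y) := by
  wlog hxy : x ≤ y generalizing x y
  · rw [mul_comm, min_comm]
    exact this hy hx (by linarith) (le_of_not_ge hxy)
  rw [min_eq_left hxy, mul_comm]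
  exact mul_le_mul_of_nonneg_right (greenProfile_le_two_pow_mul hr hy (by linarith))
    (greenProfile_nonneg hx)

theorem greenProfile_add_mul_le (hx : 0 ≤ x) (hy : 0 ≤ y) (hr : 0 ≤ r) (hrxy : r ≤ x + y)
    (hA : 0 ≤ A) (hAB : A ≤ B) :
    (greenProfile p x + A) * (greenProfile p y + B) ≤
      ((2 ^ p + 2) * greenProfile p (min x y) + A) * (greenProfile p r + B) := by
  have hz : 0 ≤ min x y := le_min hx hy
  have hB : 0 ≤ B := hA.trans hAB
  have hGz := greenProfile_nonneg (p := p) hz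
  have hGr := greenProfile_nonneg (p := p) hr
  have hGG := greenProfile_mul_le (p := p) hx hy hr hrxy
  have hGB : greenProfile p x * B ≤ greenProfile p (min x y) * B := by
    gcongr; exact greenProfile_le_of_le hz (min_le_left x y)
  have hAG : A * greenProfile p y ≤ B * greenProfile p (min x y) :=
    mul_le_mul hAB (greenProfile_le_of_le hz (min_le_right x y)) (greenProfile_nonneg hy) hB
  have hslack : 0 ≤ 2 * greenProfile p (min x y) * greenProfile p r +
      2 ^ p * greenProfile p (min x y) * B + A * greenProfile p r := by positivity
  linarith

theorem dampedGreen_nonneg (hr : 0 ≤ r) : 0 ≤ dampedGreen p l r :=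
  mul_nonneg (greenProfile_nonneg hr) (exp_pos _).le

theorem dampedGreen_min_le_add (hx : 0 ≤ x) (hy : 0 ≤ y) :
    dampedGreen p l (min x y) ≤ dampedGreen p l x + dampedGreen p l y := by
  rcases min_choice x y with h | h <;> rw [h]
  · exact le_add_of_nonneg_right (dampedGreen_nonneg hy)
  · exact le_add_of_nonneg_left (dampedGreen_nonneg hx)

theorem tailKernel_nonneg (hr : 0 ≤ r) (hA : 0 ≤ A) : 0 ≤ tailKernel p A l r :=
  mul_nonneg (add_nonneg (greenProfile_nonneg hr) hA) (exp_pos _).le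

theorem tailKernel_mul_le (hx : 0 ≤ x) (hy : 0 ≤ y) (hr : 0 ≤ r) (hrxy : r ≤ x + y)
    (hl : 0 < l) (hlm : l ≤ m) (hA : 0 ≤ A) (hAB : A ≤ B) :
    tailKernel p A l x * tailKernel p B m y ≤
      ((2 ^ p + 2) * (dampedGreen p l x + dampedGreen p l y) + A) * tailKernel p B m r := by
  let G := greenProfile p
  let E := exp (-(√(min x y / l) / 2))
  have hB : 0 ≤ B := hA.trans hAB
  have hGr : 0 ≤ G r := greenProfile_nonneg hr
  have hGz : 0 ≤ G (min x y) := greenProfile_nonneg (le_min hx hy)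
  have hprofile : (G x + A) * (G y + B) ≤ ((2 ^ p + 2) * G (min x y) + A) * (G r + B) :=
    greenProfile_add_mul_le hx hy hr hrxy hA hAB
  have hexp : exp (-√(x / l)) * exp (-√(y / m)) ≤ E * exp (-√(r / m)) := by
    rw [← exp_add, ← exp_add, exp_le_exp]
    linarith [sqrt_div_add_half_sqrt_min_div_le hx hy hrxy hl hlm]
  have hdamped : G (min x y) * E ≤ dampedGreen p l x + dampedGreen p l y :=
    dampedGreen_min_le_add hx hy
  have hE : E ≤ 1 := exp_le_one_iff.2 (neg_nonpos.2 (by positivity))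
  calc tailKernel p A l x * tailKernel p B m y
      = ((G x + A) * (G y + B)) * (exp (-√(x / l)) * exp (-√(y / m))) := by
        unfold tailKernel; ring
    _ ≤ (((2 ^ p + 2) * G (min x y) + A) * (G r + B)) * (E * exp (-√(r / m))) := by gcongr
    _ = ((2 ^ p + 2) * (G (min x y) * E) + A * E) * tailKernel p B m r := by
        unfold tailKernel; ring
    _ ≤ ((2 ^ p + 2) * (dampedGreen p l x + dampedGreen p l y) + A) * tailKernel p B m r := by
        have hT : 0 ≤ tailKernel p B m r := tailKernel_nonneg hr hB
        gcongr
        exact mul_le_of_le_one_right hA hE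

theorem add_one_pow_mul_greenProfile_le (hr : 0 ≤ r) :
    (r + 1) ^ p * greenProfile p r ≤ 2 ^ p := by
  unfold greenProfile
  rw [← div_eq_mul_inv, div_le_iff₀ (by positivity)]
  calc (r + 1) ^ p ≤ 2 ^ (p - 1) * (r ^ p + 1 ^ p) := add_pow_le hr zero_le_one p
    _ ≤ 2 ^ p * (r ^ p + 1) := by
        rw [one_pow]
        gcongr
        · exact one_le_two
        · exact p.sub_le 1

theorem exists_pow_mul_dampedGreen_le (p : ℕ) : ∃ C : ℝ, 0 < C ∧ ∀ l r : ℝ, 1 ≤ l → 0 ≤ r →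
    (2 * r + 1) ^ (p + 1) * dampedGreen p l r ≤ C * l ^ 3 * ((l + r) ^ 2)⁻¹ := by
  let M : ℝ := 4 ^ 3 * (2 * 3).factorial * exp 1
  refine ⟨2 ^ (p + 1) * 2 ^ p * M, by positivity, fun l r hl hr ↦ ?_⟩
  have : 0 < l := one_pos.trans_le hl
  have hG : 0 ≤ greenProfile p r := greenProfile_nonneg hr
  have hvolume : (2 * r + 1) ^ (p + 1) ≤ 2 ^ (p + 1) * (r + 1) ^ p * (l + r) :=
    calc (2 * r + 1) ^ (p + 1) ≤ (2 * (r + 1)) ^ (p + 1) := by gcongr; linarith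
      _ = 2 ^ (p + 1) * (r + 1) ^ p * (r + 1) := by rw [mul_pow]; ring
      _ ≤ 2 ^ (p + 1) * (r + 1) ^ p * (l + r) :=
        mul_le_mul_of_nonneg_left (by linarith) (by positivity)
  have hdecay : exp (-(√(r / l) / 2)) ≤ M * l ^ 3 / (l + r) ^ 3 :=
    calc exp (-(√(r / l) / 2)) ≤ M / (1 + r / l) ^ 3 := exp_neg_half_sqrt_le (by positivity) 3
      _ = M * l ^ 3 / (l + r) ^ 3 := by field_simp
  calc (2 * r + 1) ^ (p + 1) * dampedGreen p l r
      ≤ (2 ^ (p + 1) * (r + 1) ^ p * (l + r)) *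
          (greenProfile p r * (M * l ^ 3 / (l + r) ^ 3)) := by
        unfold dampedGreen; gcongr
    _ = 2 ^ (p + 1) * ((r + 1) ^ p * greenProfile p r) * M * l ^ 3 * ((l + r) ^ 2)⁻¹ := by
        field_simp
    _ ≤ 2 ^ (p + 1) * 2 ^ p * M * l ^ 3 * ((l + r) ^ 2)⁻¹ := by
        gcongr; exact add_one_pow_mul_greenProfile_le hr

theorem exists_sum_dampedGreen_torusDist_le (p : ℕ) : ∃ C : ℝ, 0 < C ∧
    ∀ (L : ℕ) [NeZero L] (l : ℝ), 1 ≤ l → ∀ a : Fin (p + 2) → ZMod L,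
      ∑ c, dampedGreen p l (torusDist a c) ≤ C * l ^ 2 := by
  obtain ⟨C, hC, hshell⟩ := exists_pow_mul_dampedGreen_le p
  refine ⟨4 * C, by positivity, fun L _ l hl a ↦ ?_⟩
  let S := Finset.univ.image (torusDist a)
  calc ∑ c, dampedGreen p l (torusDist a c)
      ≤ ∑ k ∈ S, 2 * (2 * (k : ℝ) + 1) ^ (p + 1) * dampedGreen p l k :=
        sum_comp_torusDist_le (g := fun k ↦ dampedGreen p l k)
          (fun k ↦ dampedGreen_nonneg k.cast_nonneg) a
    _ ≤ ∑ k ∈ S, 2 * C * l ^ 3 * ((l + k) ^ 2)⁻¹ :=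
        Finset.sum_le_sum fun k _ ↦ by linarith [hshell l k hl k.cast_nonneg]
    _ = 2 * C * l ^ 3 * ∑ k ∈ S, ((l + k) ^ 2)⁻¹ := by rw [Finset.mul_sum]
    _ ≤ 2 * C * l ^ 3 * (2 / l) := by gcongr; exact sum_inv_add_sq_le hl S
    _ = 4 * C * l ^ 2 := by field_simp; ring

theorem exists_sum_tailKernel_mul_le (p : ℕ) : ∃ K : ℝ, 0 < K ∧
    ∀ (L : ℕ) [NeZero L] (l m A B : ℝ), 1 ≤ l → l ≤ m → 0 ≤ A → A ≤ B →
      ∀ a b : Fin (p + 2) → ZMod L,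
        ∑ c, tailKernel p A l (torusDist a c) * tailKernel p B m (torusDist c b) ≤
          (K * l ^ 2 + (L : ℝ) ^ (p + 2) * A) * tailKernel p B m (torusDist a b) := by
  obtain ⟨C, hC, hsum⟩ := exists_sum_dampedGreen_torusDist_le p
  refine ⟨(2 ^ p + 2) * (C + C), by positivity, fun L _ l m A B hl hlm hA hAB a b ↦ ?_⟩
  have hcard : (Fintype.card (Fin (p + 2) → ZMod L) : ℝ) = (L : ℝ) ^ (p + 2) := by simp
  have hT : 0 ≤ tailKernel p B m (torusDist a b) :=
    tailKernel_nonneg (Nat.cast_nonneg _) (hA.trans hAB)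
  calc ∑ c, tailKernel p A l (torusDist a c) * tailKernel p B m (torusDist c b)
      ≤ ∑ c, ((2 ^ p + 2) * (dampedGreen p l (torusDist a c) + dampedGreen p l (torusDist b c)) +
          A) * tailKernel p B m (torusDist a b) := by
        refine Finset.sum_le_sum fun c _ ↦ ?_
        rw [torusDist_comm b c]
        exact tailKernel_mul_le (Nat.cast_nonneg _) (Nat.cast_nonneg _) (Nat.cast_nonneg _)
          (mod_cast torusDist_triangle a c b) (one_pos.trans_le hl) hlm hA hAB
    _ = ((2 ^ p + 2) * (∑ c, dampedGreen p l (torusDist a c) +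
          ∑ c, dampedGreen p l (torusDist b c)) + (L : ℝ) ^ (p + 2) * A) *
          tailKernel p B m (torusDist a b) := by
        rw [← Finset.sum_mul, Finset.sum_add_distrib, ← Finset.mul_sum, Finset.sum_add_distrib,
          Finset.sum_const, Finset.card_univ, nsmul_eq_mul, hcard]
    _ ≤ ((2 ^ p + 2) * (C * l ^ 2 + C * l ^ 2) + (L : ℝ) ^ (p + 2) * A) *
          tailKernel p B m (torusDist a b) := by
        gcongr
        · exact hsum L l hl a
        · exact hsum L l hl b
    _ = ((2 ^ p + 2) * (C + C) * l ^ 2 + (L : ℝ) ^ (p + 2) * A) *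
          tailKernel p B m (torusDist a b) := by ring

end TailKernel

theorem one_le_ellT {L : ℕ} [NeZero L] {t : ℝ} (ht0 : 0 ≤ t) (ht1 : t < 1) : 1 ≤ ellT L t :=
  le_min (Real.one_le_rpow_of_pos_of_le_one_of_nonpos (by linarith) (by linarith) (by norm_num))
    (mod_cast NeZero.one_le)

theorem ellT_le_ellT {L : ℕ} {u t : ℝ} (hut : u ≤ t) (ht1 : t < 1) : ellT L u ≤ ellT L t :=
  min_le_min_right _ (Real.rpow_le_rpow_of_nonpos (by linarith) (by linarith) (by norm_num))

theorem ellT_sq_le {L : ℕ} {t : ℝ} (ht1 : t < 1) : ellT L t ^ 2 ≤ (1 - t)⁻¹ := by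
  have ht : 0 ≤ 1 - t := by linarith
  calc ellT L t ^ 2 ≤ ((1 - t) ^ (-(1 / 2 : ℝ))) ^ 2 :=
        pow_le_pow_left₀ (le_min (Real.rpow_nonneg ht _) L.cast_nonneg) (min_le_left _ _) 2
    _ = (1 - t)⁻¹ := by
        rw [← Real.rpow_mul_natCast ht, ← Real.rpow_neg_one]
        norm_num

theorem tailT_eq_tailKernel (d L : ℕ) (t r : ℝ) :
    tailT d L t r = tailKernel (d - 2) ((L : ℝ) ^ d * (1 - t))⁻¹ (ellT L t) r := by
  rw [tailT, tailKernel, greenProfile, Real.sqrt_eq_rpow]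

theorem tail_function_convolution_general (d : ℕ) (hd : 2 ≤ d) :
    ∃ C : ℝ, 0 < C ∧
      ∀ (L : ℕ) [NeZero L] (u t : ℝ), 0 ≤ u → u ≤ t → t < 1 →
        ∀ a b : Fin d → ZMod L,
          ∑ c : Fin d → ZMod L,
              tailT d L u (torusDist a c) * tailT d L t (torusDist c b) ≤
            C / (1 - u) * tailT d L t (torusDist a b) := by
  obtain ⟨p, rfl⟩ := Nat.exists_eq_add_of_le' hd
  obtain ⟨K, hK, hconv⟩ := exists_sum_tailKernel_mul_le p
  refine ⟨K + 1, by positivity, fun L _ u t hu hut ht a b ↦ ?_⟩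
  have hL : (0 : ℝ) < L := mod_cast NeZero.pos L
  have : 0 < 1 - t := by linarith
  have hu' : 0 < 1 - u := by linarith
  let A := ((L : ℝ) ^ (p + 2) * (1 - u))⁻¹
  let B := ((L : ℝ) ^ (p + 2) * (1 - t))⁻¹
  have hA : 0 ≤ A := by positivity
  have hAB : A ≤ B := inv_anti₀ (by positivity) (by gcongr)
  have hzero_mode : (L : ℝ) ^ (p + 2) * A = (1 - u)⁻¹ := by simp only [A]; field_simp
  simp only [tailT_eq_tailKernel, Nat.add_sub_cancel]
  refine (hconv L _ _ A B (one_le_ellT hu (hut.trans_lt ht)) (ellT_le_ellT hut ht) hA hAB a b).trans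
    (mul_le_mul_of_nonneg_right ?_ (tailKernel_nonneg (Nat.cast_nonneg _) (hA.trans hAB)))
  rw [hzero_mode, div_eq_mul_inv, add_mul, one_mul]
  gcongr
  exact ellT_sq_le (hut.trans_lt ht)

/-- **Convolution estimate for tail functions (Lemma 4.3).**
There is a constant `C_d > 0`, depending only on `d`, such that for every `L ≥ 2` and all
`0 ≤ u ≤ t < 1` satisfying either `1−u ≥ 1−t ≥ L^{−2}` or `L^{−d} ≤ 1−t ≤ 1−u ≤ L^{−2}`,
and all `a, b ∈ ℤ_L^d`:
`Σ_c T_u(|a−c|)·T_t(|c−b|) ≤ (C_d/(1−u))·T_t(|a−b|)`. -/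
theorem tail_function_convolution (d : ℕ) (hd : 3 ≤ d) :
    ∃ C : ℝ, 0 < C ∧
      ∀ (L : ℕ) [NeZero L], 2 ≤ L →
        ∀ u t : ℝ, 0 ≤ u → u ≤ t → t < 1 →
          (((L : ℝ) ^ 2)⁻¹ ≤ 1 - t ∨
            (((L : ℝ) ^ d)⁻¹ ≤ 1 - t ∧ 1 - u ≤ ((L : ℝ) ^ 2)⁻¹)) →
          ∀ a b : Fin d → ZMod L,
            ∑ c : Fin d → ZMod L,
                tailT d L u (torusDist a c) * tailT d L t (torusDist c b) ≤
              C / (1 - u) * tailT d L t (torusDist a b) := by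
  obtain ⟨C, hC, hconv⟩ := tail_function_convolution_general d (by omega)
  exact ⟨C, hC, fun L _ _ u t hu hut ht _ ↦ hconv L u t hu hut ht⟩
end

section
/- Ward's inequality for G-loops (Lemma 5.1, inequality (5.2)): Let n ≥ 2 and 1 ≤ k ≤ n−1. There exists a constant C_n > 0, depending only on n, such that for every choice of a_1,…,a_{n−1} ∈ ℤ_L^d: max_{σ∈{+,−}^n} Σ_{a_n∈ℤ_L^d} |L^{(n)}_{σ,(a_1,…,a_{n−1},a_n)}| ≤ (C_n/(W^d·η)) · ( max_{σ'∈{+,−}^{2k−1}, b∈(ℤ_L^d)^{2k−1}} |L^{(2k−1)}_{σ',b}| · max_{σ''∈{+,−}^{2n−2k−1}, b'∈(ℤ_L^d)^{2n−2k−1}} |L^{(2n−2k−1)}_{σ'',b'}| )^{1/2}. -/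
/-- The rescaled block projection `E_a = W^{-d}·Id_a` associated with the fiber of `a`
under the block map `π`; here `Wd = W^d`. -/
noncomputable def Eblk {ι B : Type} [DecidableEq ι] [DecidableEq B]
    (Wd : ℕ) (π : ι → B) (a : B) : Matrix ι ι ℂ :=
  Matrix.diagonal fun x => if π x = a then ((Wd : ℂ))⁻¹ else 0

/-- The pair of resolvents `G(+) = (H − z)⁻¹` and `G(−) = (H − conj z)⁻¹`. -/
noncomputable def resolv {ι : Type} [Fintype ι] [DecidableEq ι]
    (H : Matrix ι ι ℂ) (z : ℂ) : Bool → Matrix ι ι ℂ :=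
  fun b => if b then (H - z • (1 : Matrix ι ι ℂ))⁻¹
    else (H - (starRingEnd ℂ) z • (1 : Matrix ι ι ℂ))⁻¹

/-- The `n`-loop `L^{(n)}_{σ,a} := Tr(G(σ_1)E_{a_1} ⋯ G(σ_n)E_{a_n})`. -/
noncomputable def gLoop {ι B : Type} [Fintype ι] [DecidableEq ι] [DecidableEq B]
    (Wd : ℕ) (π : ι → B) (Gm : Bool → Matrix ι ι ℂ)
    (n : ℕ) (σ : Fin n → Bool) (a : Fin n → B) : ℂ :=
  Matrix.trace (((List.finRange n).map fun i => Gm (σ i) * Eblk Wd π (a i)).prod)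

/-!
Let `n = p + q + 2`. The `n`-loop is `Tr(Q E_{a_n})` with `Q = X E_a Y`, where `X` and `Y` are
alternating products containing `p` and `q` block projections. Since the blocks partition the
index set, summing over `a_n` leaves at most `W^{-d} ∑ₓ |Q_{xx}|`. Cauchy–Schwarz with respect to
the positive semidefinite weight `E_a` bounds this by `W^{-d}` times the square root of
`Tr(X* X E_a) · Tr(Y Y* E_a)`. In `X* X` the two innermost factors are `G(σ)* G(σ)`, which the Ward
identity `G* G = (G(+) - G(-)) / (2iη)` replaces by a difference of single resolvents, so
`Tr(X* X E_a)` is `1 / (2iη)` times a difference of two `(2p + 1)`-loops; likewise for `Y*`.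
-/

section AlternatingProduct

variable {S B R M : Type*}

/-- Products `G(s₀) E(a₁) G(s₁) ⋯ E(aₙ) G(sₙ)`: the open chains which become loops after
multiplication by one more `E(a)` and taking the trace. The index is the number `n` of factors
`E(aᵢ)`; the labels `sᵢ` and `aᵢ` are left existential. -/
inductive IsAlternatingProd [Mul M] (G : S → M) (E : B → M) : ℕ → M → Prop
  | single (s : S) : IsAlternatingProd G E 0 (G s)
  | cons (s : S) (a : B) {n : ℕ} {x : M} (hx : IsAlternatingProd G E n x) :
      IsAlternatingProd G E (n + 1) (G s * E a * x)

namespace IsAlternatingProd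

theorem join [Semigroup M] {G : S → M} {E : B → M} {p q : ℕ} {x y : M}
    (hx : IsAlternatingProd G E p x) (a : B) (hy : IsAlternatingProd G E q y) :
    IsAlternatingProd G E (p + q + 1) (x * E a * y) := by
  induction hx with
  | single s => simpa only [zero_add] using cons s a hy
  | cons s b _ ih => simpa only [mul_assoc, Nat.add_right_comm] using cons s b ih

theorem exists_eq_mul [Semigroup M] {G : S → M} {E : B → M} {p q : ℕ} {z : M}
    (hz : IsAlternatingProd G E (p + q + 1) z) :
    ∃ x a y, IsAlternatingProd G E p x ∧ IsAlternatingProd G E q y ∧ z = x * E a * y := by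
  induction p generalizing z with
  | zero =>
    rw [zero_add] at hz
    cases hz with
    | cons s a hy => exact ⟨G s, a, _, single s, hy, rfl⟩
  | succ p ih =>
    rw [Nat.add_right_comm p 1 q] at hz
    cases hz with
    | cons s b hz' =>
      obtain ⟨x, a, y, hx, hy, rfl⟩ := ih hz'
      exact ⟨G s * E b * x, a, y, cons s b hx, hy, by simp only [mul_assoc]⟩

protected theorem star [Semigroup M] [StarMul M] {G : S → M} {E : B → M}
    (hG : ∀ s, ∃ t, star (G s) = G t) (hE : ∀ a, IsSelfAdjoint (E a)) {n : ℕ} {x : M}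
    (hx : IsAlternatingProd G E n x) : IsAlternatingProd G E n (star x) := by
  induction hx with
  | single s =>
    obtain ⟨t, ht⟩ := hG s
    exact ht ▸ single t
  | cons s a _ ih =>
    obtain ⟨t, ht⟩ := hG s
    simpa only [star_mul, (hE a).star_eq, ht, add_zero, mul_assoc] using ih.join a (single t)

theorem exists_star_mul_self_eq_smul_sub [CommSemiring R] [Ring M] [StarMul M] [Algebra R M]
    {G : S → M} {E : B → M} {c : R} (hG : ∀ s, ∃ t, star (G s) = G t)
    (hE : ∀ a, IsSelfAdjoint (E a))
    (hward : ∀ s, ∃ t t', star (G s) * G s = c • (G t - G t')) {n : ℕ} {x : M}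
    (hx : IsAlternatingProd G E n x) :
    ∃ y y', IsAlternatingProd G E (2 * n) y ∧ IsAlternatingProd G E (2 * n) y' ∧
      star x * x = c • (y - y') := by
  cases hx with
  | single s =>
    obtain ⟨t, t', h⟩ := hward s
    exact ⟨G t, G t', single t, single t', h⟩
  | @cons s a n x hx =>
    obtain ⟨t, t', h⟩ := hward s
    have hinsert (u : S) :
        IsAlternatingProd G E (2 * (n + 1)) (star x * E a * (G u * E a * x)) := by
      simpa only [two_mul, add_assoc, add_comm, add_left_comm] using
        (hx.star hG hE).join a (cons u a hx)
    refine ⟨_, _, hinsert t, hinsert t', ?_⟩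
    calc star (G s * E a * x) * (G s * E a * x)
        = star x * E a * (star (G s) * G s) * (E a * x) := by
          simp only [star_mul, (hE a).star_eq, mul_assoc]
      _ = c • (star x * E a * (G t * E a * x) - star x * E a * (G t' * E a * x)) := by
          simp only [h, mul_sub, sub_mul, mul_smul_comm, smul_mul_assoc, mul_assoc]

theorem exists_mul_eq_prod_ofFn [Monoid M] {G : S → M} {E : B → M} {n : ℕ} {x : M}
    (hx : IsAlternatingProd G E n x) (b : B) :
    ∃ (σ : Fin (n + 1) → S) (a : Fin (n + 1) → B),
      x * E b = (List.ofFn fun i => G (σ i) * E (a i)).prod := by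
  induction hx with
  | single s => exact ⟨fun _ => s, fun _ => b, by simp⟩
  | cons s c _ ih =>
    obtain ⟨σ, a, h⟩ := ih
    refine ⟨Fin.cons s σ, Fin.cons c a, ?_⟩
    simp only [List.ofFn_succ (n := _ + 1), List.prod_cons, Fin.cons_zero, Fin.cons_succ, ← h,
      mul_assoc]

end IsAlternatingProd

theorem exists_isAlternatingProd_prod_ofFn_snoc [Monoid M] (G : S → M) (E : B → M) {n : ℕ}
    (σ : Fin (n + 1) → S) (a : Fin n → B) :
    ∃ x, IsAlternatingProd G E n x ∧ ∀ b,
      (List.ofFn fun i => G (σ i) * E (Fin.snoc (α := fun _ => B) a b i)).prod = x * E b := by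
  induction n with
  | zero => exact ⟨_, .single (σ 0), fun b => by simp [Fin.snoc]⟩
  | succ n ih =>
    obtain ⟨x, hx, hprod⟩ := ih (Fin.tail σ) (Fin.tail a)
    refine ⟨_, .cons (σ 0) (a 0) hx, fun b => ?_⟩
    have hsnoc : Fin.snoc (α := fun _ => B) a b =
        Fin.cons (α := fun _ => B) (a 0) (Fin.snoc (α := fun _ => B) (Fin.tail a) b) := by
      rw [Fin.cons_snoc_eq_snoc_cons, Fin.cons_self_tail]
    rw [hsnoc, List.ofFn_succ, List.prod_cons, mul_assoc _ x, ← hprod]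
    rfl

end AlternatingProduct

section TraceCauchySchwarz

open Matrix
open scoped ComplexOrder MatrixOrder

variable {m n 𝕜 : Type*} [Fintype m] [Fintype n] [RCLike 𝕜]

theorem sum_sum_norm_sq_eq_norm_trace_conjTranspose_mul_self (A : Matrix m n 𝕜) :
    ∑ i, ∑ j, ‖A i j‖ ^ 2 = ‖trace (Aᴴ * A)‖ := by
  have htrace : trace (Aᴴ * A) = ((∑ i, ∑ j, ‖A i j‖ ^ 2 : ℝ) : 𝕜) := by
    rw [Finset.sum_comm]
    simp [trace, mul_apply, RCLike.conj_mul]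
  rw [htrace, RCLike.norm_ofReal, abs_of_nonneg (by positivity)]

theorem sum_norm_mul_conjTranspose_apply_self_le (A B : Matrix m n 𝕜) :
    ∑ i, ‖(A * Bᴴ) i i‖ ≤ √(‖trace (Aᴴ * A)‖ * ‖trace (Bᴴ * B)‖) := by
  calc ∑ i, ‖(A * Bᴴ) i i‖
      ≤ ∑ i, ∑ j, ‖A i j‖ * ‖B i j‖ := by
        gcongr with i
        simpa [mul_apply] using norm_sum_le Finset.univ fun j => A i j * Bᴴ j i
    _ = ∑ ij : m × n, ‖A ij.1 ij.2‖ * ‖B ij.1 ij.2‖ := by rw [Fintype.sum_prod_type]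
    _ ≤ √(∑ ij : m × n, ‖A ij.1 ij.2‖ ^ 2) * √(∑ ij : m × n, ‖B ij.1 ij.2‖ ^ 2) :=
        Real.sum_mul_le_sqrt_mul_sqrt _ _ _
    _ = √(‖trace (Aᴴ * A)‖ * ‖trace (Bᴴ * B)‖) := by
        simp only [Fintype.sum_prod_type, sum_sum_norm_sq_eq_norm_trace_conjTranspose_mul_self,
          Real.sqrt_mul (norm_nonneg _)]

theorem sum_norm_mul_posSemidef_mul_conjTranspose_apply_self_le (A B : Matrix m n 𝕜)
    {D : Matrix n n 𝕜} (hD : D.PosSemidef) :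
    ∑ i, ‖(A * D * Bᴴ) i i‖ ≤ √(‖trace (Aᴴ * A * D)‖ * ‖trace (Bᴴ * B * D)‖) := by
  classical
  obtain ⟨C, rfl⟩ := CStarAlgebra.nonneg_iff_eq_star_mul_self.mp hD.nonneg
  have htrace (X : Matrix m n 𝕜) :
      trace ((X * Cᴴ)ᴴ * (X * Cᴴ)) = trace (Xᴴ * X * (Cᴴ * C)) := by
    rw [conjTranspose_mul, conjTranspose_conjTranspose, Matrix.mul_assoc, trace_mul_comm]
    simp only [Matrix.mul_assoc]
  have hfactor : A * (Cᴴ * C) * Bᴴ = A * Cᴴ * (B * Cᴴ)ᴴ := by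
    simp only [conjTranspose_mul, conjTranspose_conjTranspose, Matrix.mul_assoc]
  rw [star_eq_conjTranspose, hfactor, ← htrace, ← htrace]
  exact sum_norm_mul_conjTranspose_apply_self_le (A * Cᴴ) (B * Cᴴ)

end TraceCauchySchwarz

section Resolvent

open Matrix

theorem isUnit_sub_smul_one_of_isHermitian {ι 𝕜 : Type*} [Fintype ι] [DecidableEq ι] [RCLike 𝕜]
    {H : Matrix ι ι 𝕜} (hH : H.IsHermitian) {z : 𝕜} (hz : RCLike.im z ≠ 0) :
    IsUnit (H - z • (1 : Matrix ι ι 𝕜)) := by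
  have hspec : z ∉ spectrum 𝕜 H := by
    rw [hH.spectrum_eq_image_range]
    rintro ⟨r, -, rfl⟩
    exact hz (RCLike.ofReal_im r)
  rw [spectrum.notMem_iff, Algebra.algebraMap_eq_smul_one] at hspec
  simpa only [neg_sub] using hspec.neg

theorem inv_sub_smul_one_sub_inv_sub_smul_one {ι R : Type*} [Fintype ι] [DecidableEq ι]
    [CommRing R] {H : Matrix ι ι R} {z w : R} (hz : IsUnit (H - z • (1 : Matrix ι ι R)))
    (hw : IsUnit (H - w • (1 : Matrix ι ι R))) :
    (H - z • (1 : Matrix ι ι R))⁻¹ - (H - w • (1 : Matrix ι ι R))⁻¹ =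
      (z - w) • ((H - z • (1 : Matrix ι ι R))⁻¹ * (H - w • (1 : Matrix ι ι R))⁻¹) := by
  rw [Matrix.inv_sub_inv (iff_of_true hz hw), sub_sub_sub_cancel_left, ← sub_smul]
  simp only [mul_smul_comm, smul_mul_assoc, mul_one]

variable {ι : Type} [Fintype ι] [DecidableEq ι] {H : Matrix ι ι ℂ}

theorem star_resolv (hH : H.IsHermitian) (z : ℂ) (s : Bool) :
    star (resolv H z s) = resolv H z (!s) := by
  cases s <;> simp [resolv, star_eq_conjTranspose, conjTranspose_nonsing_inv, hH.eq]

theorem star_resolv_mul_resolv (hH : H.IsHermitian) {z : ℂ} (hz : z.im ≠ 0) (s : Bool) :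
    star (resolv H z s) * resolv H z s =
      (z - starRingEnd ℂ z)⁻¹ • (resolv H z true - resolv H z false) := by
  have hunit := isUnit_sub_smul_one_of_isHermitian hH hz
  have hunit' := isUnit_sub_smul_one_of_isHermitian hH (z := starRingEnd ℂ z) (by simpa using hz)
  have hne : z - starRingEnd ℂ z ≠ 0 := by simpa [Complex.sub_conj] using hz
  rw [star_resolv hH, eq_inv_smul_iff₀ hne]
  cases s
  · simpa [resolv] using (inv_sub_smul_one_sub_inv_sub_smul_one hunit hunit').symm
  · rw [← neg_inj, ← neg_smul, neg_sub, neg_sub]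
    simpa [resolv] using (inv_sub_smul_one_sub_inv_sub_smul_one hunit' hunit).symm

end Resolvent

section Loops

open Matrix
open scoped ComplexOrder

variable {ι B : Type} [DecidableEq ι] [DecidableEq B] {Wd : ℕ} {π : ι → B}

theorem posSemidef_Eblk (Wd : ℕ) (π : ι → B) (a : B) : (Eblk Wd π a).PosSemidef := by
  refine PosSemidef.diagonal fun x => ?_
  split_ifs <;> simp

variable [Fintype ι]

theorem natCast_mul_trace_mul_Eblk (hWd : Wd ≠ 0) (P : Matrix ι ι ℂ) (b : B) :
    Wd * trace (P * Eblk Wd π b) = ∑ x with π x = b, P x x := by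
  have hWd' : (Wd : ℂ) ≠ 0 := Nat.cast_ne_zero.mpr hWd
  simp only [trace, diag, Eblk, mul_diagonal, mul_ite, mul_zero, ← Finset.sum_filter,
    Finset.mul_sum]
  exact Finset.sum_congr rfl fun x _ => by field_simp

theorem sum_norm_trace_mul_Eblk_le [Fintype B] (hWd : Wd ≠ 0) (P : Matrix ι ι ℂ) :
    ∑ b, ‖trace (P * Eblk Wd π b)‖ ≤ (Wd : ℝ)⁻¹ * ∑ x, ‖P x x‖ := by
  rw [le_inv_mul_iff₀ (by positivity), Finset.mul_sum, ← Finset.sum_fiberwise _ π]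
  gcongr with b
  calc (Wd : ℝ) * ‖trace (P * Eblk Wd π b)‖ = ‖∑ x with π x = b, P x x‖ := by
        rw [← natCast_mul_trace_mul_Eblk hWd, norm_mul, Complex.norm_natCast]
    _ ≤ ∑ x with π x = b, ‖P x x‖ := norm_sum_le _ _

variable {G : Bool → Matrix ι ι ℂ}

theorem gLoop_eq_trace_prod_ofFn (Wd : ℕ) (π : ι → B) (G : Bool → Matrix ι ι ℂ) {n : ℕ}
    (σ : Fin n → Bool) (a : Fin n → B) :
    gLoop Wd π G n σ a = trace (List.ofFn fun i => G (σ i) * Eblk Wd π (a i)).prod := by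
  rw [gLoop, List.ofFn_eq_map]

/-- `max_{σ,b} |L^{(n)}_{σ,b}|`, the largest modulus of an `n`-loop. -/
noncomputable def maxGLoop (Wd : ℕ) (π : ι → B) (G : Bool → Matrix ι ι ℂ) (n : ℕ) : ℝ :=
  ⨆ σ : Fin n → Bool, ⨆ b : Fin n → B, ‖gLoop Wd π G n σ b‖

variable {H : Matrix ι ι ℂ} {z : ℂ}

section Bounds

variable [Finite B]

theorem norm_gLoop_le_maxGLoop {n : ℕ} (σ : Fin n → Bool) (b : Fin n → B) :
    ‖gLoop Wd π G n σ b‖ ≤ maxGLoop Wd π G n :=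
  (le_ciSup (f := fun b => ‖gLoop Wd π G n σ b‖) (Set.finite_range _).bddAbove b).trans <|
    le_ciSup (f := fun σ => ⨆ b, ‖gLoop Wd π G n σ b‖) (Set.finite_range _).bddAbove σ

theorem norm_trace_mul_Eblk_le_maxGLoop {n : ℕ} {A : Matrix ι ι ℂ}
    (hA : IsAlternatingProd G (Eblk Wd π) n A) (b : B) :
    ‖trace (A * Eblk Wd π b)‖ ≤ maxGLoop Wd π G (n + 1) := by
  obtain ⟨σ, a, h⟩ := hA.exists_mul_eq_prod_ofFn b
  rw [h, ← gLoop_eq_trace_prod_ofFn]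
  exact norm_gLoop_le_maxGLoop σ a

theorem norm_trace_star_mul_self_mul_Eblk_le (hH : H.IsHermitian) (hz : z.im ≠ 0) {n : ℕ}
    {A : Matrix ι ι ℂ} (hA : IsAlternatingProd (resolv H z) (Eblk Wd π) n A) (a : B) :
    ‖trace (star A * A * Eblk Wd π a)‖ ≤ |z.im|⁻¹ * maxGLoop Wd π (resolv H z) (2 * n + 1) := by
  obtain ⟨A₁, A₂, hA₁, hA₂, hward⟩ := hA.exists_star_mul_self_eq_smul_sub
    (fun s => ⟨!s, star_resolv hH z s⟩) (fun a => (posSemidef_Eblk Wd π a).isHermitian)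
    (fun s => ⟨true, false, star_resolv_mul_resolv hH hz s⟩)
  have hnorm : ‖z - starRingEnd ℂ z‖ = 2 * |z.im| := by simp [Complex.sub_conj]
  calc ‖trace (star A * A * Eblk Wd π a)‖
      = (2 * |z.im|)⁻¹ * ‖trace (A₁ * Eblk Wd π a) - trace (A₂ * Eblk Wd π a)‖ := by
        rw [hward, smul_mul_assoc, trace_smul, norm_smul, norm_inv, hnorm, sub_mul, trace_sub]
    _ ≤ (2 * |z.im|)⁻¹ * (maxGLoop Wd π (resolv H z) (2 * n + 1) +
          maxGLoop Wd π (resolv H z) (2 * n + 1)) := by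
        gcongr
        exact norm_sub_le_of_le (norm_trace_mul_Eblk_le_maxGLoop hA₁ a)
          (norm_trace_mul_Eblk_le_maxGLoop hA₂ a)
    _ = |z.im|⁻¹ * maxGLoop Wd π (resolv H z) (2 * n + 1) := by ring

theorem sum_norm_apply_self_le_of_isAlternatingProd (hH : H.IsHermitian) (hz : z.im ≠ 0)
    {p q : ℕ} {A : Matrix ι ι ℂ}
    (hA : IsAlternatingProd (resolv H z) (Eblk Wd π) (p + q + 1) A) :
    ∑ x, ‖A x x‖ ≤ |z.im|⁻¹ * √(maxGLoop Wd π (resolv H z) (2 * p + 1) *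
      maxGLoop Wd π (resolv H z) (2 * q + 1)) := by
  obtain ⟨X, a, Y, hX, hY, rfl⟩ := hA.exists_eq_mul
  have hY' : IsAlternatingProd (resolv H z) (Eblk Wd π) q (star Y) :=
    hY.star (fun s => ⟨!s, star_resolv hH z s⟩) fun a => (posSemidef_Eblk Wd π a).isHermitian
  have hXX := norm_trace_star_mul_self_mul_Eblk_le hH hz hX a
  have hYY := norm_trace_star_mul_self_mul_Eblk_le hH hz hY' a
  calc ∑ x, ‖(X * Eblk Wd π a * Y) x x‖
      ≤ √(‖trace (star X * X * Eblk Wd π a)‖ *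
          ‖trace (star (star Y) * star Y * Eblk Wd π a)‖) := by
        simpa only [star_eq_conjTranspose, conjTranspose_conjTranspose] using
          sum_norm_mul_posSemidef_mul_conjTranspose_apply_self_le X Yᴴ (posSemidef_Eblk Wd π a)
    _ ≤ √((|z.im|⁻¹ * maxGLoop Wd π (resolv H z) (2 * p + 1)) *
          (|z.im|⁻¹ * maxGLoop Wd π (resolv H z) (2 * q + 1))) :=
        Real.sqrt_le_sqrt (mul_le_mul hXX hYY (norm_nonneg _) ((norm_nonneg _).trans hXX))
    _ = |z.im|⁻¹ * √(maxGLoop Wd π (resolv H z) (2 * p + 1) *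
          maxGLoop Wd π (resolv H z) (2 * q + 1)) := by
        rw [mul_mul_mul_comm, Real.sqrt_mul (by positivity), Real.sqrt_mul_self (by positivity)]

end Bounds

theorem ward_inequality_loops_general [Fintype B] (hWd : Wd ≠ 0) (π : ι → B) (hH : H.IsHermitian)
    (hz : z.im ≠ 0) {m k : ℕ} (hk : 1 ≤ k) (hkm : k ≤ m + 1) (a' : Fin (m + 1) → B)
    (σ : Fin (m + 2) → Bool) :
    ∑ an, ‖gLoop Wd π (resolv H z) (m + 2) σ (Fin.snoc a' an)‖ ≤
      1 / (Wd * |z.im|) * √(maxGLoop Wd π (resolv H z) (2 * k - 1) *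
        maxGLoop Wd π (resolv H z) (2 * (m + 2) - 2 * k - 1)) := by
  obtain ⟨A, hA, hprod⟩ :=
    exists_isAlternatingProd_prod_ofFn_snoc (resolv H z) (Eblk Wd π) σ a'
  have hlen : m + 1 = (k - 1) + (m + 1 - k) + 1 := by omega
  rw [hlen] at hA
  have hp : 2 * k - 1 = 2 * (k - 1) + 1 := by omega
  have hq : 2 * (m + 2) - 2 * k - 1 = 2 * (m + 1 - k) + 1 := by omega
  simp only [gLoop_eq_trace_prod_ofFn, hprod, hp, hq, one_div, mul_inv, mul_assoc]
  refine (sum_norm_trace_mul_Eblk_le hWd A).trans ?_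
  gcongr
  exact sum_norm_apply_self_le_of_isAlternatingProd hH hz hA

end Loops

/-- **Ward's inequality for G-loops (Lemma 5.1, inequality (5.2)).**
For `n = m+2 ≥ 2` there is a constant `C_n > 0`, depending only on `n`, such that for every
`1 ≤ k ≤ n−1` and all fixed `a_1, …, a_{n−1}`:
`max_σ Σ_{a_n} |L^{(n)}_{σ,(a_1,…,a_n)}|
  ≤ (C_n/(W^d η)) (max_{σ',b}|L^{(2k−1)}_{σ',b}| · max_{σ'',b'}|L^{(2n−2k−1)}_{σ'',b'}|)^{1/2}`. -/
theorem ward_inequality_loops (m : ℕ) :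
    ∃ C : ℝ, 0 < C ∧
      ∀ k : ℕ, 1 ≤ k → k ≤ m + 1 →
        ∀ (W L d : ℕ) [NeZero L], 2 ≤ W → 2 ≤ L → 1 ≤ d →
          ∀ (ι : Type) [Fintype ι] [DecidableEq ι], Fintype.card ι = (W * L) ^ d →
            ∀ π : ι → (Fin d → ZMod L),
              (∀ a, (Finset.univ.filter fun x => π x = a).card = W ^ d) →
              ∀ H : Matrix ι ι ℂ, H.IsHermitian →
                ∀ z : ℂ, 0 < z.im →
                  ∀ (a' : Fin (m + 1) → (Fin d → ZMod L)) (σ : Fin (m + 2) → Bool),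
                    ∑ an : Fin d → ZMod L,
                        ‖gLoop (W ^ d) π (resolv H z) (m + 2) σ (Fin.snoc a' an)‖ ≤
                      C / ((W : ℝ) ^ d * z.im) *
                        Real.sqrt
                          ((⨆ σ' : Fin (2 * k - 1) → Bool,
                              ⨆ b : Fin (2 * k - 1) → (Fin d → ZMod L),
                                ‖gLoop (W ^ d) π (resolv H z) (2 * k - 1) σ' b‖) *
                            (⨆ σ'' : Fin (2 * (m + 2) - 2 * k - 1) → Bool,
                              ⨆ b' : Fin (2 * (m + 2) - 2 * k - 1) → (Fin d → ZMod L),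
                                ‖gLoop (W ^ d) π (resolv H z)
                                  (2 * (m + 2) - 2 * k - 1) σ'' b'‖)) := by
  refine ⟨1, one_pos, fun k hk hkm W L d _ hW _ _ ι _ _ _ π _ H hH z hz a' σ => ?_⟩
  simpa only [maxGLoop, Nat.cast_pow, abs_of_pos hz] using
    ward_inequality_loops_general (pow_ne_zero d (by omega : W ≠ 0)) π hH hz.ne' hk hkm a' σ
end

section
/- Generalized Ward's inequality for G-loops (Lemma 5.1, inequality (5.3)): Let n ≥ 4, let 1 ≤ k < j < l ≤ n−1, and let p ≥ 1 be an integer. There exists a constant C_{n,p} > 0, depending only on n and p, such that for every K ∈ ℕ, every map 𝒮 assigning to each a_n ∈ ℤ_L^d a subset 𝒮(a_n) ⊆ ℤ_L^d of cardinality at most K, and every choice of a_i ∈ ℤ_L^d for i ∈ {1,…,n−1}\{j}: max_{σ∈{+,−}^n} Σ_{a_n∈ℤ_L^d} Σ_{a_j∈𝒮(a_n)} |L^{(n)}_{σ,(a_1,…,a_n)}| ≤ (C_{n,p}·K/(W^d·η)) · ( max_{σ',b} |L^{(2k−1)}_{σ',b}| · max_{σ'',b'} |L^{(2n−2l−1)}_{σ'',b'}|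 )^{1/2} · ( max_{σ''',b''} |L^{(2(l−k)p)}_{σ''',b''}| )^{1/(2p)}, where each maximum runs over all sign vectors and index vectors of the indicated lengths. -/
/-!
Write `E_a = Q_a²` with `Q_a` Hermitian and cut the loop after the positions `k`, `l` and `n`, so
that it reads `Tr (Q_x A₁ Q_b) (Q_b A₂ Q_b') (Q_b' A₃ Q_x)` with `x = a_n`. Cauchy–Schwarz for the
Hilbert–Schmidt inner product puts the outer chains in Hilbert–Schmidt norm and the middle one,
which alone depends on `a_j`, in operator norm. The operator norm is at most the Schatten
`2p`-norm, whose `2p`-th power is a loop of length `2(l-k)p`. Cauchy–Schwarz in `x` leaves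
`∑_x ‖Q_x A₁ Q_b‖²`; since `∑_x E_x = W^{-d}`, it equals `W^{-d} Tr (A₁ᴴ A₁ E_b)`, and the product
`G(σ)ᴴ G(σ)` at the junction of `A₁ᴴ A₁` is collapsed by the Ward identity
`2iη G(σ)ᴴ G(σ) = G(+) - G(-)`.
-/

open Matrix
open scoped ComplexOrder MatrixOrder

namespace GLoop

section ListSplitting

variable {α : Type*}

theorem ofFn_update_eq_set {n : ℕ} (f : Fin n → α) (i : Fin n) (v : α) :
    List.ofFn (Function.update f i v) = (List.ofFn f).set i v := by
  refine List.ext_getElem (by simp) fun m _ _ => ?_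
  simp [List.getElem_set, Function.update_apply, Fin.ext_iff, eq_comm]

theorem exists_eq_append_cons {L : List α} {i : ℕ} (hi : i < L.length) :
    ∃ L₁ q L₂, L = L₁ ++ q :: L₂ ∧ L₁.length = i :=
  ⟨L.take i, L[i], L.drop (i + 1), by simp, by simp [hi.le]⟩

end ListSplitting

section Frobenius

open scoped Matrix.Norms.Frobenius

variable {m n k 𝕜 : Type*} [Fintype m] [Fintype n] [Fintype k] [RCLike 𝕜]

theorem frobenius_norm_sq_eq_sum (A : Matrix m n 𝕜) :
    ‖A‖ ^ 2 = ∑ q : m × n, ‖A q.1 q.2‖ ^ 2 := by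
  rw [frobenius_norm_def, ← Real.sqrt_eq_rpow, Real.sq_sqrt (by positivity),
    Fintype.sum_prod_type]
  simp only [Real.rpow_ofNat]

theorem ofReal_frobenius_norm_sq (A : Matrix m n 𝕜) :
    ((‖A‖ ^ 2 : ℝ) : 𝕜) = trace (Aᴴ * A) := by
  rw [frobenius_norm_sq_eq_sum, Fintype.sum_prod_type, Finset.sum_comm]
  simp [trace, mul_apply, RCLike.conj_mul]

theorem norm_trace_mul_le_frobenius_norm_mul (A : Matrix m n 𝕜) (B : Matrix n m 𝕜) :
    ‖trace (A * B)‖ ≤ ‖A‖ * ‖B‖ := by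
  have trace_eq : trace (A * B) = ∑ q : m × n, A q.1 q.2 * Bᵀ q.1 q.2 := by
    simp [Fintype.sum_prod_type, trace, mul_apply]
  rw [trace_eq, ← frobenius_norm_transpose B, ← Real.sqrt_sq (norm_nonneg A),
    ← Real.sqrt_sq (norm_nonneg Bᵀ), frobenius_norm_sq_eq_sum, frobenius_norm_sq_eq_sum]
  refine (norm_sum_le _ _).trans ?_
  simp only [norm_mul]
  exact Real.sum_mul_le_sqrt_mul_sqrt _ _ _

theorem eigenvalues_pow_le_norm_trace_pow [DecidableEq n] {M : Matrix n n 𝕜}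
    (hM : M.PosSemidef) (p : ℕ) (i : n) : hM.1.eigenvalues i ^ p ≤ ‖trace (M ^ p)‖ := by
  have hMp : (M ^ p).PosSemidef := hM.pow p
  obtain ⟨j, hj⟩ : hM.1.eigenvalues i ^ p ∈ Set.range hMp.1.eigenvalues :=
    hMp.1.spectrum_real_eq_range_eigenvalues ▸
      spectrum.pow_mem_pow M p (hM.1.eigenvalues_mem_spectrum_real i)
  calc hM.1.eigenvalues i ^ p = hMp.1.eigenvalues j := hj.symm
    _ ≤ ∑ i, hMp.1.eigenvalues i :=
        Finset.single_le_sum (fun i _ => hMp.eigenvalues_nonneg i) (Finset.mem_univ j)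
    _ = RCLike.re (trace (M ^ p)) := by
        rw [hMp.1.trace_eq_sum_eigenvalues, ← RCLike.ofReal_sum, RCLike.ofReal_re]
    _ ≤ ‖trace (M ^ p)‖ := RCLike.re_le_norm _

theorem le_algebraMap_norm_trace_pow_rpow [DecidableEq n] {M : Matrix n n 𝕜}
    (hM : M.PosSemidef) {p : ℕ} (hp : p ≠ 0) :
    M ≤ algebraMap ℝ (Matrix n n 𝕜) (‖trace (M ^ p)‖ ^ (p : ℝ)⁻¹) := by
  refine le_algebraMap_of_spectrum_le (fun t ht => ?_) hM.1
  obtain ⟨i, rfl⟩ := hM.1.spectrum_real_eq_range_eigenvalues ▸ ht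
  calc hM.1.eigenvalues i = (hM.1.eigenvalues i ^ p) ^ (p : ℝ)⁻¹ :=
        (Real.pow_rpow_inv_natCast (hM.eigenvalues_nonneg i) hp).symm
    _ ≤ ‖trace (M ^ p)‖ ^ (p : ℝ)⁻¹ :=
        Real.rpow_le_rpow (pow_nonneg (hM.eigenvalues_nonneg i) p)
          (eigenvalues_pow_le_norm_trace_pow hM p i) (by positivity)

theorem frobenius_norm_mul_sq_le_of_le_algebraMap [DecidableEq n] {Y : Matrix m n 𝕜} {t : ℝ}
    (h : Yᴴ * Y ≤ algebraMap ℝ (Matrix n n 𝕜) t) (C : Matrix n k 𝕜) :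
    ‖Y * C‖ ^ 2 ≤ t * ‖C‖ ^ 2 := by
  have trace_nonneg := ((Matrix.le_iff.mp h).conjTranspose_mul_mul_same C).trace_nonneg
  have expand : Cᴴ * (algebraMap ℝ (Matrix n n 𝕜) t - Yᴴ * Y) * C =
      (t : 𝕜) • (Cᴴ * C) - (Y * C)ᴴ * (Y * C) := by
    rw [Algebra.algebraMap_eq_smul_one, conjTranspose_mul, RCLike.real_smul_eq_coe_smul (K := 𝕜)]
    simp only [Matrix.mul_sub, Matrix.sub_mul, Matrix.mul_smul, Matrix.smul_mul, Matrix.mul_one,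
      Matrix.mul_assoc]
  rw [expand, trace_sub, trace_smul, ← ofReal_frobenius_norm_sq, ← ofReal_frobenius_norm_sq,
    smul_eq_mul, ← RCLike.ofReal_mul, ← RCLike.ofReal_sub, RCLike.ofReal_nonneg] at trace_nonneg
  linarith

theorem frobenius_norm_mul_le_schatten_norm_mul [DecidableEq n] (Y : Matrix m n 𝕜)
    (C : Matrix n k 𝕜) {p : ℕ} (hp : p ≠ 0) :
    ‖Y * C‖ ≤ ‖trace ((Yᴴ * Y) ^ p)‖ ^ (1 / (2 * p : ℝ)) * ‖C‖ := by
  refine (pow_le_pow_iff_left₀ (norm_nonneg _) (by positivity) two_ne_zero).mp ?_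
  have exponent_eq : 1 / (2 * p : ℝ) * (2 : ℕ) = (p : ℝ)⁻¹ := by
    push_cast
    field_simp
  rw [mul_pow, ← Real.rpow_mul_natCast (norm_nonneg _), exponent_eq]
  exact frobenius_norm_mul_sq_le_of_le_algebraMap
    (le_algebraMap_norm_trace_pow_rpow (posSemidef_conjTranspose_mul_self Y) hp) C

end Frobenius

section Resolvent

variable {ι : Type*} [Fintype ι]

theorem inv_sub_smul_one_sub_inv_sub_smul_one [DecidableEq ι] {R : Type*} [CommRing R]
    {H : Matrix ι ι R} {z w : R} (hz : IsUnit (H - z • (1 : Matrix ι ι R)))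
    (hw : IsUnit (H - w • (1 : Matrix ι ι R))) :
    (H - z • (1 : Matrix ι ι R))⁻¹ - (H - w • (1 : Matrix ι ι R))⁻¹ =
      (z - w) • ((H - z • (1 : Matrix ι ι R))⁻¹ * (H - w • (1 : Matrix ι ι R))⁻¹) := by
  rw [Matrix.inv_sub_inv (iff_of_true hz hw), sub_sub_sub_cancel_left, ← sub_smul]
  simp

theorem isUnit_sub_smul_one_of_im_ne_zero [DecidableEq ι] {H : Matrix ι ι ℂ}
    (hH : H.IsHermitian) {z : ℂ} (hz : z.im ≠ 0) : IsUnit (H - z • (1 : Matrix ι ι ℂ)) := by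
  have hz' : z ∉ spectrum ℂ H := by
    rw [hH.spectrum_eq_image_range]
    rintro ⟨_, -, rfl⟩
    exact hz (Complex.ofReal_im _)
  rw [← Algebra.algebraMap_eq_smul_one, ← neg_sub]
  exact (spectrum.notMem_iff.mp hz').neg

/-- The two properties of the resolvents `G(±)` at spectral parameters with imaginary parts `±η`
that enter the argument: they are adjoint to each other and satisfy the Ward identity. The Boolean
`true` stands for the sign `+`. -/
structure IsWardPair (G : Bool → Matrix ι ι ℂ) (η : ℝ) : Prop where
  conjTranspose_eq (s : Bool) : (G s)ᴴ = G (!s)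
  ward (s : Bool) : (2 * η * Complex.I) • (G (!s) * G s) = G true - G false

end Resolvent

theorem isWardPair_resolv {ι : Type} [Fintype ι] [DecidableEq ι] {H : Matrix ι ι ℂ}
    (hH : H.IsHermitian) {z : ℂ} (hz : z.im ≠ 0) :
    IsWardPair (resolv H z) z.im where
  conjTranspose_eq s := by
    cases s <;> simp [resolv, conjTranspose_nonsing_inv, hH.eq]
  ward s := by
    have unit_z := isUnit_sub_smul_one_of_im_ne_zero hH hz
    have unit_conj : IsUnit (H - (starRingEnd ℂ) z • (1 : Matrix ι ι ℂ)) :=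
      isUnit_sub_smul_one_of_im_ne_zero hH (by simpa using hz)
    have gap : z - (starRingEnd ℂ) z = 2 * z.im * Complex.I := by
      rw [Complex.sub_conj]
      push_cast
      rfl
    cases s
    · simp [resolv, inv_sub_smul_one_sub_inv_sub_smul_one unit_z unit_conj, gap]
    · rw [← neg_sub (resolv H z false)]
      simp [resolv, inv_sub_smul_one_sub_inv_sub_smul_one unit_conj unit_z, ← gap, ← neg_smul]

section Block

variable {ι B : Type} [DecidableEq ι] [DecidableEq B]

theorem conjTranspose_Eblk (w : ℕ) (π : ι → B) (a : B) : (Eblk w π a)ᴴ = Eblk w π a := by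
  rw [Eblk, diagonal_conjTranspose]
  congr 1
  ext x
  rw [Pi.star_apply]
  split_ifs <;> simp

/-- The Hermitian square root `Q_a` of `E_a`, used to distribute the two factors of
`E_a = Q_a * Q_a` over the neighbouring pieces of a loop. -/
noncomputable def sqrtEblk (w : ℕ) (π : ι → B) (a : B) : Matrix ι ι ℂ :=
  diagonal fun x => if π x = a then ((√w)⁻¹ : ℝ) else 0

theorem conjTranspose_sqrtEblk (w : ℕ) (π : ι → B) (a : B) :
    (sqrtEblk w π a)ᴴ = sqrtEblk w π a := by
  rw [sqrtEblk, diagonal_conjTranspose]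
  congr 1
  ext x
  rw [Pi.star_apply]
  split_ifs
  · exact Complex.conj_ofReal _
  · exact star_zero _

theorem smul_sum_Eblk [Fintype B] {w : ℕ} (hw : w ≠ 0) (π : ι → B) :
    (w : ℂ) • ∑ a, Eblk w π a = (1 : Matrix ι ι ℂ) := by
  ext x y
  by_cases h : x = y <;> simp [Matrix.sum_apply, Eblk, one_apply, h, hw]

variable [Fintype ι]

theorem sqrtEblk_mul_self (w : ℕ) (π : ι → B) (a : B) :
    sqrtEblk w π a * sqrtEblk w π a = Eblk w π a := by
  rw [sqrtEblk, Eblk, diagonal_mul_diagonal]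
  congr 1
  ext x
  split_ifs
  · rw [← Complex.ofReal_mul, ← mul_inv, Real.mul_self_sqrt (Nat.cast_nonneg w)]
    push_cast
    rfl
  · simp

end Block

section Chain

variable {ι B : Type} [Fintype ι] [DecidableEq ι] [DecidableEq B]

/-- `IsGChain w π G n A` says that `A` is a chain `G(σ_1) E_{a_1} G(σ_2) E_{a_2} ⋯ G(σ_n)`, that is,
an `n`-loop cut open at its last block projection. The length `n ≥ 1` counts the factors `G`. -/
inductive IsGChain (w : ℕ) (π : ι → B) (G : Bool → Matrix ι ι ℂ) : ℕ → Matrix ι ι ℂ → Prop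
  | single (s : Bool) : IsGChain w π G 1 (G s)
  | cons (s : Bool) (b : B) {n : ℕ} {A : Matrix ι ι ℂ} (hA : IsGChain w π G n A) :
      IsGChain w π G (n + 1) (G s * Eblk w π b * A)

/-- The product `G(σ_1) E_{a_1} ⋯ G(σ_n) E_{a_n}` over a list of pairs `(σ_i, a_i)`; its trace is an
`n`-loop. -/
noncomputable def gProd (w : ℕ) (π : ι → B) (G : Bool → Matrix ι ι ℂ) (l : List (Bool × B)) :
    Matrix ι ι ℂ :=
  (l.map fun q => G q.1 * Eblk w π q.2).prod

/-- The maximum of `|L^{(n)}_{σ,a}|` over all sign vectors `σ` and index vectors `a`. -/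
noncomputable def maxLoop (w : ℕ) (π : ι → B) (G : Bool → Matrix ι ι ℂ) (n : ℕ) : ℝ :=
  ⨆ σ : Fin n → Bool, ⨆ a : Fin n → B, ‖gLoop w π G n σ a‖

variable {w : ℕ} {π : ι → B} {G : Bool → Matrix ι ι ℂ} {η : ℝ} {n m : ℕ} {A C : Matrix ι ι ℂ}

theorem gProd_append (l₁ l₂ : List (Bool × B)) :
    gProd w π G (l₁ ++ l₂) = gProd w π G l₁ * gProd w π G l₂ := by
  simp [gProd]

theorem gProd_append_singleton (l : List (Bool × B)) (q : Bool × B) :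
    gProd w π G (l ++ [q]) = gProd w π G l * G q.1 * Eblk w π q.2 := by
  simp [gProd, Matrix.mul_assoc]

theorem gLoop_eq_trace_gProd (σ : Fin n → Bool) (a : Fin n → B) :
    gLoop w π G n σ a = trace (gProd w π G (List.ofFn fun i => (σ i, a i))) := by
  rw [gLoop, gProd, List.ofFn_eq_map, List.map_map]
  rfl

theorem maxLoop_nonneg (n : ℕ) : 0 ≤ maxLoop w π G n :=
  Real.iSup_nonneg fun _ => Real.iSup_nonneg fun _ => norm_nonneg _

theorem norm_trace_gProd_le_maxLoop [Finite B] (l : List (Bool × B)) :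
    ‖trace (gProd w π G l)‖ ≤ maxLoop w π G l.length := by
  have trace_eq : trace (gProd w π G l) =
      gLoop w π G l.length (fun i => (l.get i).1) (fun i => (l.get i).2) := by
    rw [gLoop_eq_trace_gProd]
    exact congrArg (fun l => trace (gProd w π G l)) (List.ofFn_get l).symm
  rw [trace_eq]
  exact (Finite.le_ciSup (fun a => ‖gLoop w π G l.length (fun i => (l.get i).1) a‖) _).trans
    (Finite.le_ciSup (fun σ => ⨆ a, ‖gLoop w π G l.length σ a‖) _)

theorem isGChain_gProd_mul (l : List (Bool × B)) (s : Bool) :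
    IsGChain w π G (l.length + 1) (gProd w π G l * G s) := by
  induction l with
  | nil => simpa [gProd] using IsGChain.single s
  | cons q l ih => simpa [gProd, Matrix.mul_assoc] using ih.cons q.1 q.2

namespace IsGChain

theorem append (hA : IsGChain w π G n A) (hC : IsGChain w π G m C) (b : B) :
    IsGChain w π G (n + m) (A * Eblk w π b * C) := by
  induction hA with
  | single s => simpa only [add_comm 1 m] using hC.cons s b
  | cons s b' _ ih => simpa only [Matrix.mul_assoc, add_right_comm] using ih.cons s b'

theorem exists_mul_Eblk_eq_gProd (hA : IsGChain w π G n A) (b : B) :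
    ∃ l : List (Bool × B), l.length = n ∧ A * Eblk w π b = gProd w π G l := by
  induction hA with
  | single s => exact ⟨[(s, b)], rfl, by simp [gProd]⟩
  | cons s b' _ ih =>
    obtain ⟨l, rfl, hl⟩ := ih
    exact ⟨(s, b') :: l, rfl, by simp [Matrix.mul_assoc, hl, gProd]⟩

theorem norm_trace_mul_Eblk_le [Finite B] (hA : IsGChain w π G n A) (b : B) :
    ‖trace (A * Eblk w π b)‖ ≤ maxLoop w π G n := by
  obtain ⟨l, rfl, hl⟩ := hA.exists_mul_Eblk_eq_gProd b
  exact hl ▸ norm_trace_gProd_le_maxLoop l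

theorem conjTranspose (hG : ∀ s, (G s)ᴴ = G (!s)) (hA : IsGChain w π G n A) :
    IsGChain w π G n Aᴴ := by
  induction hA with
  | single s => exact hG s ▸ single (!s)
  | cons s b _ ih =>
    simpa only [conjTranspose_mul, hG, conjTranspose_Eblk, Matrix.mul_assoc] using
      ih.append (single (!s)) b

theorem exists_conjTranspose_mul_self_eq_sub (hG : IsWardPair G η) (hA : IsGChain w π G n A) :
    ∃ C₁ C₂, IsGChain w π G (2 * n - 1) C₁ ∧ IsGChain w π G (2 * n - 1) C₂ ∧
      (2 * η * Complex.I) • (Aᴴ * A) = C₁ - C₂ := by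
  cases hA with
  | single s => exact ⟨_, _, single true, single false, by rw [hG.conjTranspose_eq, hG.ward]⟩
  | @cons s b n A hA =>
    have chain (t : Bool) :
        IsGChain w π G (2 * (n + 1) - 1) (Aᴴ * Eblk w π b * (G t * Eblk w π b * A)) := by
      convert (hA.conjTranspose hG.conjTranspose_eq).append (hA.cons t b) b using 1
      omega
    refine ⟨_, _, chain true, chain false, ?_⟩
    have regroup : (G s * Eblk w π b * A)ᴴ * (G s * Eblk w π b * A) =
        Aᴴ * Eblk w π b * (G (!s) * G s) * (Eblk w π b * A) := by
      simp only [conjTranspose_mul, hG.conjTranspose_eq, conjTranspose_Eblk, Matrix.mul_assoc]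
    rw [regroup, ← Matrix.smul_mul, ← Matrix.mul_smul, hG.ward]
    simp only [Matrix.mul_sub, Matrix.sub_mul, Matrix.mul_assoc]

theorem norm_trace_conjTranspose_mul_self_le [Finite B] (hη : 0 < η) (hG : IsWardPair G η)
    (hA : IsGChain w π G n A) (b : B) :
    ‖trace (Aᴴ * A * Eblk w π b)‖ ≤ maxLoop w π G (2 * n - 1) / η := by
  obtain ⟨C₁, C₂, hC₁, hC₂, ward⟩ := hA.exists_conjTranspose_mul_self_eq_sub hG
  have trace_eq : (2 * η * Complex.I) * trace (Aᴴ * A * Eblk w π b) =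
      trace (C₁ * Eblk w π b) - trace (C₂ * Eblk w π b) := by
    rw [← smul_eq_mul, ← trace_smul, ← Matrix.smul_mul, ward, Matrix.sub_mul, trace_sub]
  have norm_le : 2 * η * ‖trace (Aᴴ * A * Eblk w π b)‖ ≤
      maxLoop w π G (2 * n - 1) + maxLoop w π G (2 * n - 1) := by
    calc 2 * η * ‖trace (Aᴴ * A * Eblk w π b)‖
        = ‖trace (C₁ * Eblk w π b) - trace (C₂ * Eblk w π b)‖ := by
          rw [← trace_eq]
          simp [abs_of_pos hη]
      _ ≤ _ := (norm_sub_le _ _).trans <|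
          add_le_add (hC₁.norm_trace_mul_Eblk_le b) (hC₂.norm_trace_mul_Eblk_le b)
  rw [le_div_iff₀ hη]
  linarith

theorem exists_sqrtEblk_conj_pow (hA : IsGChain w π G n A) (b : B) (p : ℕ) :
    ∃ C, IsGChain w π G (n * (p + 1)) C ∧
      (sqrtEblk w π b * A * sqrtEblk w π b) ^ (p + 1) = sqrtEblk w π b * C * sqrtEblk w π b := by
  induction p with
  | zero => exact ⟨A, by simpa using hA, by simp⟩
  | succ p ih =>
    obtain ⟨C, hC, pow_eq⟩ := ih
    refine ⟨C * Eblk w π b * A, hC.append hA b, ?_⟩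
    rw [pow_succ, pow_eq, ← sqrtEblk_mul_self]
    simp only [Matrix.mul_assoc]

theorem norm_trace_pow_le [Finite B] (hG : ∀ s, (G s)ᴴ = G (!s)) (hA : IsGChain w π G n A)
    (b b' : B) {p : ℕ} (hp : p ≠ 0) :
    ‖trace (((sqrtEblk w π b * A * sqrtEblk w π b')ᴴ *
      (sqrtEblk w π b * A * sqrtEblk w π b')) ^ p)‖ ≤ maxLoop w π G (2 * n * p) := by
  obtain ⟨q, rfl⟩ := Nat.exists_eq_succ_of_ne_zero hp
  have square : (sqrtEblk w π b * A * sqrtEblk w π b')ᴴ * (sqrtEblk w π b * A * sqrtEblk w π b') =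
      sqrtEblk w π b' * (Aᴴ * Eblk w π b * A) * sqrtEblk w π b' := by
    simp only [conjTranspose_mul, conjTranspose_sqrtEblk, ← sqrtEblk_mul_self, Matrix.mul_assoc]
  obtain ⟨C, hC, pow_eq⟩ := ((hA.conjTranspose hG).append hA b).exists_sqrtEblk_conj_pow b' q
  rw [square, pow_eq, Matrix.mul_assoc, trace_mul_comm, Matrix.mul_assoc, sqrtEblk_mul_self,
    two_mul]
  exact hC.norm_trace_mul_Eblk_le b'

open scoped Matrix.Norms.Frobenius

theorem frobenius_norm_mul_le_maxLoop_rpow_mul [Finite B] (hG : ∀ s, (G s)ᴴ = G (!s))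
    (hA : IsGChain w π G n A) (b b' : B) {p : ℕ} (hp : p ≠ 0) (C : Matrix ι ι ℂ) :
    ‖sqrtEblk w π b * A * sqrtEblk w π b' * C‖ ≤
      maxLoop w π G (2 * n * p) ^ (1 / (2 * p : ℝ)) * ‖C‖ := by
  refine (frobenius_norm_mul_le_schatten_norm_mul _ C hp).trans ?_
  gcongr
  exact hA.norm_trace_pow_le hG b b' hp

variable [Fintype B]

theorem sum_left_frobenius_norm_sq_le (hw : 0 < w) (hη : 0 < η) (hG : IsWardPair G η)
    (hA : IsGChain w π G n A) (b : B) :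
    ∑ x, ‖sqrtEblk w π x * A * sqrtEblk w π b‖ ^ 2 ≤ maxLoop w π G (2 * n - 1) / (w * η) := by
  have term_eq (x : B) : ((‖sqrtEblk w π x * A * sqrtEblk w π b‖ ^ 2 : ℝ) : ℂ) =
      trace (Aᴴ * Eblk w π x * (A * Eblk w π b)) := by
    rw [← RCLike.ofReal_eq_complex_ofReal, ofReal_frobenius_norm_sq, conjTranspose_mul,
      conjTranspose_mul, conjTranspose_sqrtEblk, conjTranspose_sqrtEblk, Matrix.mul_assoc,
      trace_mul_comm]
    simp only [← sqrtEblk_mul_self, Matrix.mul_assoc]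
  have sum_eq : ((w * ∑ x, ‖sqrtEblk w π x * A * sqrtEblk w π b‖ ^ 2 : ℝ) : ℂ) =
      trace (Aᴴ * A * Eblk w π b) := by
    rw [Complex.ofReal_mul, Complex.ofReal_sum, Finset.sum_congr rfl fun x _ => term_eq x,
      ← trace_sum, ← Finset.sum_mul, ← Finset.mul_sum, Complex.ofReal_natCast, ← smul_eq_mul,
      ← trace_smul, ← Matrix.smul_mul, ← Matrix.mul_smul, smul_sum_Eblk hw.ne', Matrix.mul_one,
      Matrix.mul_assoc]
  have weighted_le := hA.norm_trace_conjTranspose_mul_self_le hη hG b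
  rw [← sum_eq, Complex.norm_real, Real.norm_of_nonneg (by positivity)] at weighted_le
  rwa [← div_div, div_right_comm, le_div_iff₀' (by positivity)]

theorem sum_right_frobenius_norm_sq_le (hw : 0 < w) (hη : 0 < η) (hG : IsWardPair G η)
    (hA : IsGChain w π G n A) (b : B) :
    ∑ x, ‖sqrtEblk w π b * A * sqrtEblk w π x‖ ^ 2 ≤ maxLoop w π G (2 * n - 1) / (w * η) := by
  convert (hA.conjTranspose hG.conjTranspose_eq).sum_left_frobenius_norm_sq_le hw hη hG b using 3
  rw [← frobenius_norm_conjTranspose, conjTranspose_mul, conjTranspose_mul,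
    conjTranspose_sqrtEblk, conjTranspose_sqrtEblk, Matrix.mul_assoc]

end IsGChain

open scoped Matrix.Norms.Frobenius

theorem norm_trace_mul_mul_le [Finite B] (hG : ∀ s, (G s)ᴴ = G (!s)) {A₂ : Matrix ι ι ℂ}
    (hA₂ : IsGChain w π G n A₂) (A₁ A₃ : Matrix ι ι ℂ) (b b' x : B) {p : ℕ} (hp : p ≠ 0) :
    ‖trace (A₁ * Eblk w π b * (A₂ * Eblk w π b') * (A₃ * Eblk w π x))‖ ≤
      maxLoop w π G (2 * n * p) ^ (1 / (2 * p : ℝ)) *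
        (‖sqrtEblk w π x * A₁ * sqrtEblk w π b‖ * ‖sqrtEblk w π b' * A₃ * sqrtEblk w π x‖) := by
  have cyclic : trace (A₁ * Eblk w π b * (A₂ * Eblk w π b') * (A₃ * Eblk w π x)) =
      trace (sqrtEblk w π x * A₁ * sqrtEblk w π b * (sqrtEblk w π b * A₂ * sqrtEblk w π b' *
        (sqrtEblk w π b' * A₃ * sqrtEblk w π x))) := by
    simp only [← sqrtEblk_mul_self, ← Matrix.mul_assoc]
    rw [trace_mul_comm]
    simp only [Matrix.mul_assoc]
  rw [cyclic, mul_left_comm]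
  refine (norm_trace_mul_le_frobenius_norm_mul _ _).trans ?_
  gcongr
  exact hA₂.frobenius_norm_mul_le_maxLoop_rpow_mul hG b b' hp _

variable [Fintype B] {n₁ n₂ n₃ p K : ℕ} {A₁ A₃ : Matrix ι ι ℂ}

theorem sum_frobenius_norm_mul_le (hw : 0 < w) (hη : 0 < η) (hG : IsWardPair G η)
    (hA₁ : IsGChain w π G n₁ A₁) (hA₃ : IsGChain w π G n₃ A₃) (b b' : B) :
    ∑ x, ‖sqrtEblk w π x * A₁ * sqrtEblk w π b‖ * ‖sqrtEblk w π b' * A₃ * sqrtEblk w π x‖ ≤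
      √(maxLoop w π G (2 * n₁ - 1) * maxLoop w π G (2 * n₃ - 1)) / (w * η) := by
  refine (Real.sum_mul_le_sqrt_mul_sqrt _ _ _).trans ?_
  calc _ ≤ √(maxLoop w π G (2 * n₁ - 1) / (w * η)) *
        √(maxLoop w π G (2 * n₃ - 1) / (w * η)) := by
        gcongr
        · exact hA₁.sum_left_frobenius_norm_sq_le hw hη hG b
        · exact hA₃.sum_right_frobenius_norm_sq_le hw hη hG b'
    _ = √(maxLoop w π G (2 * n₁ - 1) * maxLoop w π G (2 * n₃ - 1)) / (w * η) := by
        rw [Real.sqrt_div (maxLoop_nonneg _), Real.sqrt_div (maxLoop_nonneg _), div_mul_div_comm,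
          ← Real.sqrt_mul (maxLoop_nonneg _), Real.mul_self_sqrt (by positivity)]

theorem sum_norm_trace_mul_mul_le (hp : p ≠ 0) (hw : 0 < w) (hη : 0 < η) (hG : IsWardPair G η)
    (hA₁ : IsGChain w π G n₁ A₁) {A₂ : B → Matrix ι ι ℂ} (hA₂ : ∀ y, IsGChain w π G n₂ (A₂ y))
    (hA₃ : IsGChain w π G n₃ A₃) (b b' : B) {S : B → Finset B} (hS : ∀ x, (S x).card ≤ K) :
    ∑ x, ∑ y ∈ S x,
        ‖trace (A₁ * Eblk w π b * (A₂ y * Eblk w π b') * (A₃ * Eblk w π x))‖ ≤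
      K / (w * η) * √(maxLoop w π G (2 * n₁ - 1) * maxLoop w π G (2 * n₃ - 1)) *
        maxLoop w π G (2 * n₂ * p) ^ (1 / (2 * p : ℝ)) := by
  have schatten_nonneg : 0 ≤ maxLoop w π G (2 * n₂ * p) ^ (1 / (2 * p : ℝ)) :=
    Real.rpow_nonneg (maxLoop_nonneg _) _
  calc _ ≤ ∑ x, K * (maxLoop w π G (2 * n₂ * p) ^ (1 / (2 * p : ℝ)) *
        (‖sqrtEblk w π x * A₁ * sqrtEblk w π b‖ * ‖sqrtEblk w π b' * A₃ * sqrtEblk w π x‖)) := by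
        refine Finset.sum_le_sum fun x _ => (Finset.sum_le_card_nsmul _ _ _ fun y _ =>
          norm_trace_mul_mul_le hG.conjTranspose_eq (hA₂ y) A₁ A₃ b b' x hp).trans ?_
        rw [nsmul_eq_mul]
        gcongr
        exact hS x
    _ = K * (maxLoop w π G (2 * n₂ * p) ^ (1 / (2 * p : ℝ)) *
        ∑ x, ‖sqrtEblk w π x * A₁ * sqrtEblk w π b‖ *
          ‖sqrtEblk w π b' * A₃ * sqrtEblk w π x‖) := by
        rw [← Finset.mul_sum, ← Finset.mul_sum]
    _ ≤ K * (maxLoop w π G (2 * n₂ * p) ^ (1 / (2 * p : ℝ)) *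
        (√(maxLoop w π G (2 * n₁ - 1) * maxLoop w π G (2 * n₃ - 1)) / (w * η))) := by
        gcongr
        exact sum_frobenius_norm_mul_le hw hη hG hA₁ hA₃ b b'
    _ = _ := by ring

end Chain

section Cut

variable {ι B : Type} [Fintype ι] [DecidableEq ι] [DecidableEq B]

/-- The positions `k`, `j`, `l` count from `1` and list indices from `0`, hence the `j - 1`. -/
theorem exists_gProd_set_eq_mul (w : ℕ) (π : ι → B) (G : Bool → Matrix ι ι ℂ) {n k j l : ℕ}
    (hk : 1 ≤ k) (hkj : k < j) (hjl : j < l) (hl : l ≤ n) (s t : Bool) {L : List (Bool × B)}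
    (hL : L.length = n + 1) :
    ∃ (A₁ : Matrix ι ι ℂ) (A₂ : B → Matrix ι ι ℂ) (A₃ : Matrix ι ι ℂ) (b b' : B),
      IsGChain w π G k A₁ ∧ (∀ y, IsGChain w π G (l - k) (A₂ y)) ∧
        IsGChain w π G (n + 1 - l) A₃ ∧ ∀ x y,
          gProd w π G ((L.set (j - 1) (s, y)).set n (t, x)) =
            A₁ * Eblk w π b * (A₂ y * Eblk w π b') * (A₃ * Eblk w π x) := by
  obtain ⟨P, q, R, rfl, hP⟩ := exists_eq_append_cons (i := k - 1) (by omega : k - 1 < L.length)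
  rw [List.length_append, List.length_cons] at hL
  obtain ⟨M, q', T, rfl, hM⟩ :=
    exists_eq_append_cons (i := l - k - 1) (by omega : l - k - 1 < R.length)
  rw [List.length_append, List.length_cons] at hL
  have T_ne_nil : T ≠ [] := List.ne_nil_of_length_pos (by omega)
  obtain ⟨U, q'', rfl⟩ : ∃ U q'', T = U ++ [q''] :=
    ⟨_, _, (List.dropLast_append_getLast T_ne_nil).symm⟩
  rw [List.length_append, List.length_singleton] at hL
  obtain ⟨i, rfl⟩ := Nat.exists_eq_add_of_lt hkj
  have set_eq (x y : B) :
      ((P ++ q :: (M ++ q' :: (U ++ [q'']))).set (k + i) (s, y)).set n (t, x) =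
        P ++ [q] ++ (M.set i (s, y) ++ [q']) ++ (U ++ [(t, x)]) := by
    have hi : i < M.length := by omega
    have hj : k + i = P.length + (i + 1) := by omega
    have hn : n = P.length + (M.length + (U.length + 1) + 1) := by omega
    rw [hj, hn]
    simp [hi]
  refine ⟨gProd w π G P * G q.1, fun y => gProd w π G (M.set i (s, y)) * G q'.1,
    gProd w π G U * G t, q.2, q'.2, ?_, fun y => ?_, ?_, fun x y => ?_⟩
  · convert isGChain_gProd_mul P q.1
    omega
  · convert isGChain_gProd_mul (M.set i (s, y)) q'.1
    rw [List.length_set]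
    omega
  · convert isGChain_gProd_mul U t
    omega
  · simp only [Nat.add_sub_cancel, set_eq, gProd_append _ (_ ++ [_]), gProd_append_singleton]

theorem exists_gLoop_update_eq_trace (w : ℕ) (π : ι → B) (G : Bool → Matrix ι ι ℂ) {n k j l : ℕ}
    (hk : 1 ≤ k) (hkj : k < j) (hjl : j < l) (hl : l ≤ n) (σ : Fin (n + 1) → Bool)
    (a : Fin (n + 1) → B) :
    ∃ (A₁ : Matrix ι ι ℂ) (A₂ : B → Matrix ι ι ℂ) (A₃ : Matrix ι ι ℂ) (b b' : B),
      IsGChain w π G k A₁ ∧ (∀ y, IsGChain w π G (l - k) (A₂ y)) ∧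
        IsGChain w π G (n + 1 - l) A₃ ∧ ∀ x y,
          gLoop w π G (n + 1) σ
              (Function.update (Function.update a ⟨j - 1, by omega⟩ y) (Fin.last n) x) =
            trace (A₁ * Eblk w π b * (A₂ y * Eblk w π b') * (A₃ * Eblk w π x)) := by
  let i : Fin (n + 1) := ⟨j - 1, by omega⟩
  obtain ⟨A₁, A₂, A₃, b, b', hA₁, hA₂, hA₃, gProd_eq⟩ :=
    exists_gProd_set_eq_mul w π G hk hkj hjl hl (σ i) (σ (Fin.last n))
      (List.length_ofFn (f := fun m => (σ m, a m)))
  refine ⟨A₁, A₂, A₃, b, b', hA₁, hA₂, hA₃, fun x y => ?_⟩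
  have pair_update : (fun m => (σ m, Function.update (Function.update a i y) (Fin.last n) x m)) =
      Function.update (Function.update (fun m => (σ m, a m)) i (σ i, y)) (Fin.last n)
        (σ (Fin.last n), x) := by
    ext m <;> simp only [Function.update_apply] <;> split_ifs <;> simp_all
  rw [gLoop_eq_trace_gProd, ← gProd_eq, pair_update, ofFn_update_eq_set, ofFn_update_eq_set]
  rfl

end Cut
end GLoop

theorem generalized_ward_inequality_loops_general {ι B : Type} [Fintype ι] [DecidableEq ι]
    [Fintype B] [DecidableEq B] {n p k j l K w : ℕ} (hp : p ≠ 0) (hk : 1 ≤ k) (hkj : k < j)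
    (hjl : j < l) (hl : l ≤ n) (hw : 0 < w) (π : ι → B) {H : Matrix ι ι ℂ} (hH : H.IsHermitian)
    {z : ℂ} (hz : 0 < z.im) {S : B → Finset B} (hS : ∀ x, (S x).card ≤ K)
    (a : Fin (n + 1) → B) (σ : Fin (n + 1) → Bool) :
    ∑ x, ∑ y ∈ S x, ‖gLoop w π (resolv H z) (n + 1) σ
        (Function.update (Function.update a ⟨j - 1, by omega⟩ y) (Fin.last n) x)‖ ≤
      K / (w * z.im) *
        √(GLoop.maxLoop w π (resolv H z) (2 * k - 1) *
          GLoop.maxLoop w π (resolv H z) (2 * (n + 1) - 2 * l - 1)) *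
        GLoop.maxLoop w π (resolv H z) (2 * (l - k) * p) ^ (1 / (2 * (p : ℝ))) := by
  obtain ⟨A₁, A₂, A₃, b, b', hA₁, hA₂, hA₃, gLoop_eq⟩ :=
    GLoop.exists_gLoop_update_eq_trace w π (resolv H z) hk hkj hjl hl σ a
  simp only [gLoop_eq, ← Nat.mul_sub]
  exact GLoop.sum_norm_trace_mul_mul_le hp hw hz (GLoop.isWardPair_resolv hH hz.ne')
    hA₁ hA₂ hA₃ b b' hS

/-- **Generalized Ward's inequality for G-loops (Lemma 5.1, inequality (5.3)).**
For `n = m+4 ≥ 4` and integer `p ≥ 1` there is `C_{n,p} > 0`, depending only on `n` and `p`,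
such that for all `1 ≤ k < j < l ≤ n−1`, every `K ∈ ℕ`, every map `𝒮` assigning to each
`a_n` a set of at most `K` blocks, and every choice of the remaining loop indices:
`max_σ Σ_{a_n} Σ_{a_j∈𝒮(a_n)} |L^{(n)}_{σ,a}| ≤ (C_{n,p}·K/(W^d η)) ·
  (max|L^{(2k−1)}| · max|L^{(2n−2l−1)}|)^{1/2} · (max|L^{(2(l−k)p)}|)^{1/(2p)}`. -/
theorem generalized_ward_inequality_loops (m p : ℕ) (hp : 1 ≤ p) :
    ∃ C : ℝ, 0 < C ∧
      ∀ (k j l : ℕ) (hk : 1 ≤ k) (hkj : k < j) (hjl : j < l) (hl : l ≤ m + 3),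
        ∀ (K : ℕ) (W L d : ℕ) [NeZero L], 2 ≤ W → 2 ≤ L → 1 ≤ d →
          ∀ (ι : Type) [Fintype ι] [DecidableEq ι], Fintype.card ι = (W * L) ^ d →
            ∀ π : ι → (Fin d → ZMod L),
              (∀ a, (Finset.univ.filter fun x => π x = a).card = W ^ d) →
              ∀ H : Matrix ι ι ℂ, H.IsHermitian →
                ∀ z : ℂ, 0 < z.im →
                  ∀ S : (Fin d → ZMod L) → Finset (Fin d → ZMod L),
                    (∀ an, (S an).card ≤ K) →
                    ∀ (a : Fin (m + 4) → (Fin d → ZMod L)) (σ : Fin (m + 4) → Bool),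
                      (∑ an : Fin d → ZMod L, ∑ aj ∈ S an,
                          ‖gLoop (W ^ d) π (resolv H z) (m + 4) σ
                            (Function.update
                              (Function.update a ⟨j - 1, by omega⟩ aj)
                              (Fin.last (m + 3)) an)‖) ≤
                        C * K / ((W : ℝ) ^ d * z.im) *
                          Real.sqrt
                            ((⨆ σ' : Fin (2 * k - 1) → Bool,
                                ⨆ b : Fin (2 * k - 1) → (Fin d → ZMod L),
                                  ‖gLoop (W ^ d) π (resolv H z) (2 * k - 1) σ' b‖) *
                              (⨆ σ'' : Fin (2 * (m + 4) - 2 * l - 1) → Bool,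
                                ⨆ b' : Fin (2 * (m + 4) - 2 * l - 1) → (Fin d → ZMod L),
                                  ‖gLoop (W ^ d) π (resolv H z)
                                    (2 * (m + 4) - 2 * l - 1) σ'' b'‖)) *
                          (⨆ σ''' : Fin (2 * (l - k) * p) → Bool,
                            ⨆ b'' : Fin (2 * (l - k) * p) → (Fin d → ZMod L),
                              ‖gLoop (W ^ d) π (resolv H z) (2 * (l - k) * p) σ''' b''‖) ^
                            (1 / (2 * (p : ℝ))) := by
  refine ⟨1, one_pos, fun k j l hk hkj hjl hl K W L d _ hW _ _ ι _ _ _ π _ H hH z hz S hS a σ => ?_⟩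
  simpa only [GLoop.maxLoop, one_mul, Nat.cast_pow] using
    generalized_ward_inequality_loops_general (Nat.one_le_iff_ne_zero.mp hp) hk hkj hjl hl
      (pow_pos (by omega : 0 < W) d) π hH hz hS a σ
end

section
/- Evolution kernel estimate with zero modes removed (Lemma A.2): Fix integers n ≥ 2 and d ≥ 3 and a constant κ ∈ (0,1). Let L ≥ 2 be an integer, let E ∈ ℝ with |E| ≤ 2 − κ and m = m(E), let σ = (σ_1,…,σ_n) ∈ {+,−}^n, and let s, t satisfy 1 − L^{-2} ≤ s ≤ t < 1. For i ∈ {1,…,n}, define the partial-averaging operator on tensors 𝒜 : (ℤ_L^d)^n → ℂ by (P^(i) ∘ 𝒜)_{(a_1,…,a_n)} := L^{-d}·Σ_{b∈ℤ_L^d} 𝒜_{(a_1,…,a_{i−1},b,a_{i+1},…,a_n)}, set Q^(i) := Id − P^(i), and for J ⊆ {1,…,n} set Q^(J) := ∏_{i∈J} Q^(i) (these operators commute); let I_diff(σ) := {i ∈ {1,…,n} : σ_i ≠ σ_{i+1}} (cyclic convention σ_{n+1} = σ_1). Then for every subset J with I_diff(σ) ⊆ J ⊆ {1,…,n} and every constant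 τ > 0, there exists a constant C > 0, depending only on n, d, C₀, κ and τ, such that for every tensor 𝒜 : (ℤ_L^d)^n → ℂ: ‖Q^(J) ∘ U^{(n)}_{s,t,σ} ∘ 𝒜‖_∞ ≤ C · L^τ · ‖𝒜‖_∞. -/
/-- The block-level variance matrix `S^(B)` on `ℤ_L^d`, with coupling constant `λ`:
`S^(B)_{ab} = (1+2dλ²)⁻¹ 1_{a=b} + λ²(1+2dλ²)⁻¹ 1_{a∼b}`. -/
noncomputable def SBmat (d L : ℕ) [NeZero L] (lam : ℝ) :
    Matrix (Fin d → ZMod L) (Fin d → ZMod L) ℂ :=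
  Matrix.of fun a b =>
    if a = b then ((1 / (1 + 2 * d * lam ^ 2) : ℝ) : ℂ)
    else if torusDist a b = 1 then ((lam ^ 2 / (1 + 2 * d * lam ^ 2) : ℝ) : ℂ)
    else 0

/-- The Stieltjes transform of the semicircle law at a real energy `E` with `|E| ≤ 2`:
`m(E) := (−E + i√(4−E²))/2`, so that `|m(E)| = 1`. -/
noncomputable def mSC (E : ℝ) : ℂ :=
  (-(E : ℂ) + Complex.I * ((Real.sqrt (4 - E ^ 2) : ℝ) : ℂ)) / 2

/-- `m(+) := m(E)` and `m(−) := conj (m(E))`, with `+` encoded by `true`. -/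
noncomputable def mSign (E : ℝ) : Bool → ℂ :=
  fun b => if b then mSC E else (starRingEnd ℂ) (mSC E)

/-- The evolution kernel `U^{(n)}_{s,t,σ}` acting on tensors `𝒜 : (ℤ_L^d)^n → ℂ`:
`(U^{(n)}_{s,t,σ} ∘ 𝒜)_a = Σ_b Π_i [(I − s·m(σ_i)m(σ_{i+1})S^(B))
(I − t·m(σ_i)m(σ_{i+1})S^(B))⁻¹]_{a_i b_i} · 𝒜_b`, with cyclic convention `σ_{n+1} = σ_1`. -/
noncomputable def Ukernel (d L : ℕ) [NeZero L] (lam : ℝ) (E s t : ℝ)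
    (n : ℕ) [NeZero n] (σ : Fin n → Bool)
    (A : (Fin n → Fin d → ZMod L) → ℂ) : (Fin n → Fin d → ZMod L) → ℂ :=
  fun a => ∑ b : Fin n → Fin d → ZMod L,
    (∏ i : Fin n,
      (((1 : Matrix (Fin d → ZMod L) (Fin d → ZMod L) ℂ) -
            ((s : ℂ) * mSign E (σ i) * mSign E (σ (i + 1))) • SBmat d L lam) *
          ((1 : Matrix (Fin d → ZMod L) (Fin d → ZMod L) ℂ) -
            ((t : ℂ) * mSign E (σ i) * mSign E (σ (i + 1))) • SBmat d L lam)⁻¹)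
        (a i) (b i)) * A b

/-- The partial-averaging operator `P^(i)` over the `i`-th loop index. -/
noncomputable def Pavg (d L : ℕ) [NeZero L] (n : ℕ) (i : Fin n)
    (A : (Fin n → Fin d → ZMod L) → ℂ) : (Fin n → Fin d → ZMod L) → ℂ :=
  fun a => ((L : ℂ) ^ d)⁻¹ * ∑ b : Fin d → ZMod L, A (Function.update a i b)

/-- The zero-mode-removing operator `Q^(i) := Id − P^(i)`. -/
noncomputable def Qrem (d L : ℕ) [NeZero L] (n : ℕ) (i : Fin n)
    (A : (Fin n → Fin d → ZMod L) → ℂ) : (Fin n → Fin d → ZMod L) → ℂ :=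
  fun a => A a - Pavg d L n i A a

/-- `Q^(J) := Π_{i∈J} Q^(i)` (the operators `Q^(i)` commute with one another). -/
noncomputable def QremSet (d L : ℕ) [NeZero L] (n : ℕ) (J : Finset (Fin n))
    (A : (Fin n → Fin d → ZMod L) → ℂ) : (Fin n → Fin d → ZMod L) → ℂ :=
  (J.sort (· ≤ ·)).foldr (fun i acc => Qrem d L n i acc) A

/-!
The evolution kernel is a tensor product of matrices `K = (I - ζₛ S)(I - ζₜ S)⁻¹`, one for each loop
index, so it suffices to bound each factor by a constant times `L ^ (d ε)` in the `ℓ^∞` operator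
norm, with `ε` small. Write `P` for the averaging matrix.

* On the complement of the constants, `S` has a spectral gap of order `L⁻²`. Hence `(I - P) S ^ k`
  is bounded both by `2` and by `L ^ d (1 - q / L²) ^ k`, and interpolating between the two bounds
  costs `L ^ (d ε)` but makes the series in `K = I + (ζₜ - ζₛ) ∑ ζₜ ^ k S ^ (k + 1)`, multiplied by
  `I - P`, sum to `O(L²)`. This is compensated by `|ζₜ - ζₛ| = t - s ≤ L⁻²`.
* At an index outside `J` the two charges agree, so `ζₜ = t m²` with `m = m(±)`, and `P K` is a
  multiple of `P` whose coefficient has denominator `1 - t m² r`, `r ≥ 0`. This stays at distance at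
  least `|Im m|` from `0`, which is bounded below in the bulk `|E| ≤ 2 - κ`.
-/

namespace EvolutionKernel

open Finset Matrix
open scoped Matrix.Norms.Operator

lemma le_rpow_one_sub_mul_rpow {x a b ε : ℝ} (hx : 0 ≤ x) (ha : x ≤ a) (hb : x ≤ b)
    (hε₀ : 0 ≤ ε) (hε₁ : ε ≤ 1) : x ≤ a ^ (1 - ε) * b ^ ε :=
  calc
    x = x ^ (1 - ε) * x ^ ε := by
      rw [← Real.rpow_add_of_nonneg hx (sub_nonneg.2 hε₁) hε₀, sub_add_cancel, Real.rpow_one]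
    _ ≤ a ^ (1 - ε) * b ^ ε := by
      gcongr
      exact Real.rpow_nonneg (hx.trans ha) _

lemma exists_pos_le_one_mul_le {N τ : ℝ} (hN : 0 ≤ N) (hτ : 0 < τ) :
    ∃ ε > 0, ε ≤ 1 ∧ N * ε ≤ τ := by
  refine ⟨τ / (N + τ), by positivity, div_le_one_of_le₀ (by linarith) (by positivity), ?_⟩
  rw [← mul_div_assoc, div_le_iff₀ (by positivity)]
  nlinarith

lemma mul_rpow_pow_le {B x ε τ : ℝ} {n d : ℕ} (hB : 0 ≤ B) (hx : 1 ≤ x) (hε : n * d * ε ≤ τ) :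
    (B * (x ^ d) ^ ε) ^ n ≤ B ^ n * x ^ τ := by
  have hx₀ : 0 ≤ x := zero_le_one.trans hx
  rw [mul_pow, ← Real.rpow_natCast_mul hx₀, ← Real.rpow_mul_natCast hx₀]
  gcongr
  linarith

lemma norm_pow_sub_one_le {R : Type*} [NormedRing R] [NormOneClass R] {z : R} (hz : ‖z‖ ≤ 1)
    (k : ℕ) : ‖z ^ k - 1‖ ≤ k * ‖z - 1‖ := by
  rw [← geom_sum_mul]
  refine (norm_mul_le _ _).trans (mul_le_mul_of_nonneg_right ?_ (norm_nonneg _))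
  calc
    ‖∑ i ∈ range k, z ^ i‖ ≤ ∑ _i ∈ range k, (1 : ℝ) :=
      norm_sum_le_of_le _ fun i _ => (norm_pow_le z i).trans (pow_le_one₀ (norm_nonneg z) hz)
    _ = k := by simp

-- The powers of `z` sum to zero, so they cannot all be close to `1`.
lemma one_le_mul_norm_sub_one_of_pow_eq_one {z : ℂ} {N : ℕ} [NeZero N] (hz : z ^ N = 1)
    (hz₁ : z ≠ 1) : 1 ≤ N * ‖z - 1‖ := by
  have hN : (0 : ℝ) < N := Nat.cast_pos.2 (NeZero.pos N)
  have hnorm : ‖z‖ ≤ 1 := (Complex.norm_eq_one_of_pow_eq_one hz (NeZero.ne N)).le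
  have hsum : ∑ k ∈ range N, z ^ k = 0 := by rw [geom_sum_eq hz₁, hz, sub_self, zero_div]
  refine le_of_mul_le_mul_left ?_ hN
  calc
    (N : ℝ) * 1 = ‖∑ k ∈ range N, (z ^ k - 1)‖ := by simp [sum_sub_distrib, hsum]
    _ ≤ ∑ _k ∈ range N, N * ‖z - 1‖ := norm_sum_le_of_le _ fun k hk =>
      (norm_pow_sub_one_le hnorm k).trans <| by gcongr; exact (mem_range.1 hk).le
    _ = N * (N * ‖z - 1‖) := by simp

lemma norm_add_mul_le_of_norm_eq_one {w v : ℝ} (hw : 0 < w) (hv : 0 ≤ v) {z : ℂ} (hz : ‖z‖ = 1) :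
    ‖(w : ℂ) + v * z‖ ≤ w + v - w * v / (w + v) / 2 * ‖z - 1‖ ^ 2 := by
  have hz_sq : z.re ^ 2 + z.im ^ 2 = 1 := by
    have := Complex.sq_norm_sub_sq_re z
    rw [hz] at this
    linarith
  have hsq : ‖(w : ℂ) + v * z‖ ^ 2 = (w + v) ^ 2 - w * v * ‖z - 1‖ ^ 2 := by
    simp only [Complex.sq_norm, Complex.normSq_apply, Complex.add_re, Complex.add_im,
      Complex.re_ofReal_mul, Complex.im_ofReal_mul, Complex.ofReal_re, Complex.ofReal_im,
      Complex.sub_re, Complex.sub_im, Complex.one_re, Complex.one_im]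
    linear_combination (v ^ 2 + w * v) * hz_sq
  have htri : ‖(w : ℂ) + v * z‖ ≤ w + v := by
    refine (norm_add_le _ _).trans_eq ?_
    rw [norm_mul, hz, mul_one, Complex.norm_of_nonneg hw.le, Complex.norm_of_nonneg hv]
  rw [div_div, div_mul_eq_mul_div, le_sub_comm, div_le_iff₀ (by positivity)]
  nlinarith

section OperatorNorm

variable {ι : Type*} [Fintype ι]

lemma linfty_opNorm_le_iff {M : Matrix ι ι ℂ} {c : ℝ} (hc : 0 ≤ c) :
    ‖M‖ ≤ c ↔ ∀ i, ∑ j, ‖M i j‖ ≤ c := by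
  lift c to NNReal using hc
  rw [Matrix.linfty_opNorm_def, NNReal.coe_le_coe, Finset.sup_le_iff]
  simp only [mem_univ, true_implies, ← NNReal.coe_le_coe, NNReal.coe_sum, coe_nnnorm]

lemma sum_norm_row_le (M : Matrix ι ι ℂ) (i : ι) : ∑ j, ‖M i j‖ ≤ ‖M‖ :=
  (linfty_opNorm_le_iff (norm_nonneg M)).1 le_rfl i

variable (ι) in
/-- The averaging matrix, all of whose entries are `1 / |ι|`: the one-site version of `P^(i)`. -/
noncomputable def meanMatrix : Matrix ι ι ℂ :=
  Matrix.of fun _ _ => (Fintype.card ι : ℂ)⁻¹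

lemma norm_meanMatrix_le_one : ‖meanMatrix ι‖ ≤ 1 := by
  refine (linfty_opNorm_le_iff zero_le_one).2 fun i => ?_
  simpa [meanMatrix] using mul_inv_le_one

lemma meanMatrix_mulVec_apply (f : ι → ℂ) (i : ι) :
    (meanMatrix ι *ᵥ f) i = (Fintype.card ι : ℂ)⁻¹ * ∑ j, f j := by
  simp [meanMatrix, mulVec, dotProduct, mul_sum]

variable [DecidableEq ι]

lemma norm_one_sub_meanMatrix_le_two : ‖1 - meanMatrix ι‖ ≤ 2 := by
  have hone : ‖(1 : Matrix ι ι ℂ)‖ ≤ 1 :=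
    (linfty_opNorm_le_iff zero_le_one).2 fun i => by simp [one_apply, apply_ite norm]
  linarith [norm_sub_le 1 (meanMatrix ι), norm_meanMatrix_le_one (ι := ι)]

/-- The one-site factor `(I − ζₛ S)(I − ζₜ S)⁻¹` of the evolution kernel. -/
noncomputable def evolutionFactor (S : Matrix ι ι ℂ) (ζs ζt : ℂ) : Matrix ι ι ℂ :=
  (1 - ζs • S) * (1 - ζt • S)⁻¹

lemma norm_smul_lt_one {S : Matrix ι ι ℂ} (hS : ‖S‖ ≤ 1) {ζ : ℂ} (hζ : ‖ζ‖ < 1) : ‖ζ • S‖ < 1 := by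
  rw [norm_smul]
  exact (mul_le_of_le_one_right (norm_nonneg ζ) hS).trans_lt hζ

lemma inv_one_sub_smul_eq_tsum {S : Matrix ι ι ℂ} (hS : ‖S‖ ≤ 1) {ζ : ℂ} (hζ : ‖ζ‖ < 1) :
    (1 - ζ • S)⁻¹ = ∑' k, (ζ • S) ^ k :=
  inv_eq_right_inv (mul_neg_geom_series _ (norm_smul_lt_one hS hζ))

lemma one_sub_smul_mul_inv {S : Matrix ι ι ℂ} (hS : ‖S‖ ≤ 1) {ζ : ℂ} (hζ : ‖ζ‖ < 1) :
    (1 - ζ • S) * (1 - ζ • S)⁻¹ = 1 := by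
  rw [inv_one_sub_smul_eq_tsum hS hζ]
  exact mul_neg_geom_series _ (norm_smul_lt_one hS hζ)

lemma norm_mul_inv_one_sub_smul_le {M S : Matrix ι ι ℂ} (hS : ‖S‖ ≤ 1) {ζ : ℂ} (hζ : ‖ζ‖ < 1)
    {c r : ℝ} (hr₀ : 0 ≤ r) (hr₁ : r < 1) (hM : ∀ k, ‖M * S ^ k‖ ≤ c * r ^ k) :
    ‖M * (1 - ζ • S)⁻¹‖ ≤ c * (1 - r)⁻¹ := by
  have hseries : HasSum (fun k => M * (ζ • S) ^ k) (M * (1 - ζ • S)⁻¹) := by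
    rw [inv_one_sub_smul_eq_tsum hS hζ]
    exact (summable_geometric_of_norm_lt_one (norm_smul_lt_one hS hζ)).hasSum.mul_left M
  rw [← hseries.tsum_eq]
  refine tsum_of_norm_bounded ((hasSum_geometric_of_lt_one hr₀ hr₁).mul_left c) fun k => ?_
  rw [smul_pow, Matrix.mul_smul, norm_smul, norm_pow]
  exact (mul_le_of_le_one_left (norm_nonneg _) (pow_le_one₀ (norm_nonneg ζ) hζ.le)).trans (hM k)

lemma evolutionFactor_eq_one_add {S : Matrix ι ι ℂ} (hS : ‖S‖ ≤ 1) (ζs : ℂ) {ζt : ℂ}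
    (hζ : ‖ζt‖ < 1) :
    evolutionFactor S ζs ζt = 1 + (ζt - ζs) • (S * (1 - ζt • S)⁻¹) := by
  have hsplit : 1 - ζs • S = (1 - ζt • S) + (ζt - ζs) • S := by rw [sub_smul]; abel
  rw [evolutionFactor, hsplit, add_mul, one_sub_smul_mul_inv hS hζ, smul_mul]

lemma norm_mul_evolutionFactor_le {M S : Matrix ι ι ℂ} (hS : ‖S‖ ≤ 1) (ζs : ℂ) {ζt : ℂ}
    (hζ : ‖ζt‖ < 1) {c r : ℝ} (hr₀ : 0 ≤ r) (hr₁ : r < 1) (hM : ∀ k, ‖M * S ^ k‖ ≤ c * r ^ k) :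
    ‖M * evolutionFactor S ζs ζt‖ ≤ c * (1 + ‖ζt - ζs‖ * (1 - r)⁻¹) := by
  have hM₀ : ‖M‖ ≤ c := by simpa using hM 0
  have hMS : ∀ k, ‖M * S * S ^ k‖ ≤ c * r ^ k := fun k => by
    rw [mul_assoc, ← pow_succ']
    exact (hM (k + 1)).trans <| mul_le_mul_of_nonneg_left
      (pow_le_pow_of_le_one hr₀ hr₁.le k.le_succ) ((norm_nonneg M).trans hM₀)
  rw [evolutionFactor_eq_one_add hS ζs hζ, mul_add, mul_one, Matrix.mul_smul, ← mul_assoc]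
  calc
    ‖M + (ζt - ζs) • (M * S * (1 - ζt • S)⁻¹)‖
        ≤ ‖M‖ + ‖ζt - ζs‖ * ‖M * S * (1 - ζt • S)⁻¹‖ := by
      rw [← norm_smul]
      exact norm_add_le _ _
    _ ≤ c + ‖ζt - ζs‖ * (c * (1 - r)⁻¹) := by
      gcongr
      exact norm_mul_inv_one_sub_smul_le hS hζ hr₀ hr₁ hMS
    _ = c * (1 + ‖ζt - ζs‖ * (1 - r)⁻¹) := by ring

lemma mul_evolutionFactor_of_mul_eq_smul {M S : Matrix ι ι ℂ} {μ : ℂ} (hMS : M * S = μ • M)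
    (hS : ‖S‖ ≤ 1) (ζs : ℂ) {ζt : ℂ} (hζ : ‖ζt‖ < 1) (hμ : 1 - ζt * μ ≠ 0) :
    M * evolutionFactor S ζs ζt = ((1 - ζs * μ) / (1 - ζt * μ)) • M := by
  have hM : ∀ ζ : ℂ, M * (1 - ζ • S) = (1 - ζ * μ) • M := fun ζ => by
    rw [mul_sub, mul_one, Matrix.mul_smul, hMS, smul_smul, sub_smul, one_smul]
  have hMinv : (1 - ζt * μ) • (M * (1 - ζt • S)⁻¹) = M := by
    rw [← smul_mul, ← hM, mul_assoc, one_sub_smul_mul_inv hS hζ, mul_one]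
  rw [evolutionFactor, ← mul_assoc, hM, smul_mul, div_eq_mul_inv, mul_smul]
  congr 1
  rw [eq_inv_smul_iff₀ hμ, hMinv]

end OperatorNorm

section Circulant

variable {G : Type*} [AddCommGroup G] [Fintype G]

lemma norm_circulant_le (p : G → ℂ) : ‖circulant p‖ ≤ ∑ x, ‖p x‖ := by
  refine (linfty_opNorm_le_iff (sum_nonneg fun x _ => norm_nonneg (p x))).2 fun a => ?_
  exact ((Equiv.subLeft a).sum_comp fun x => ‖p x‖).le

lemma meanMatrix_mul_circulant (p : G → ℂ) :
    meanMatrix G * circulant p = (∑ x, p x) • meanMatrix G := by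
  ext a b
  simp only [meanMatrix, mul_apply, of_apply, circulant_apply, Matrix.smul_apply,
    smul_eq_mul]
  rw [← mul_sum, mul_comm, ← (Equiv.subRight b).sum_comp p]
  rfl

/-- The Fourier coefficient of `p` at the character `ψ`: the eigenvalue of the circulant matrix
of `p` on `ψ`. -/
noncomputable def symbol (p : G → ℂ) (ψ : AddChar G ℂ) : ℂ :=
  ∑ x, p x * ψ (-x)

lemma circulant_mulVec_addChar (p : G → ℂ) (ψ : AddChar G ℂ) :
    circulant p *ᵥ ψ = symbol p ψ • ⇑ψ := by
  ext a
  rw [mulVec, dotProduct, ← (Equiv.subLeft a).sum_comp, Pi.smul_apply, symbol, smul_eq_mul, sum_mul]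
  refine sum_congr rfl fun x _ => ?_
  rw [Equiv.subLeft_apply, circulant_apply, sub_sub_cancel, sub_eq_neg_add,
    AddChar.map_add_eq_mul, mul_assoc]

lemma norm_entry_le_of_mulVec_addChar {M : Matrix G G ℂ} {ρ : ℝ}
    (hM : ∀ ψ : AddChar G ℂ, ∃ μ : ℂ, ‖μ‖ ≤ ρ ∧ M *ᵥ ψ = μ • ⇑ψ) (a b : G) : ‖M a b‖ ≤ ρ := by
  classical
  have hcard : (0 : ℝ) < Fintype.card G := Nat.cast_pos.2 Fintype.card_pos
  have hinversion : ∑ ψ : AddChar G ℂ, (M *ᵥ ψ) a * ψ (-b) = Fintype.card G * M a b := by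
    simp_rw [mulVec, dotProduct, sum_mul, mul_assoc, ← AddChar.map_add_eq_mul]
    rw [sum_comm]
    simp_rw [← mul_sum, AddChar.sum_apply_eq_ite, ← sub_eq_add_neg, sub_eq_zero]
    simp [mul_comm]
  have hterm : ∀ ψ : AddChar G ℂ, ‖(M *ᵥ ψ) a * ψ (-b)‖ ≤ ρ := fun ψ => by
    obtain ⟨μ, hμ, hψ⟩ := hM ψ
    simpa [hψ, AddChar.norm_apply] using hμ
  refine le_of_mul_le_mul_left ?_ hcard
  calc
    Fintype.card G * ‖M a b‖ = ‖∑ ψ : AddChar G ℂ, (M *ᵥ ψ) a * ψ (-b)‖ := by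
      rw [hinversion, norm_mul, Complex.norm_natCast]
    _ ≤ ∑ _ψ : AddChar G ℂ, ρ := norm_sum_le_of_le _ fun ψ _ => hterm ψ
    _ = Fintype.card G * ρ := by rw [sum_const, card_univ, AddChar.card_eq, nsmul_eq_mul]

lemma norm_symbol_le (p : G → ℂ) (ψ : AddChar G ℂ) {e : G} (he : e ≠ 0) :
    ‖symbol p ψ‖ ≤ ∑ x, ‖p x‖ - (‖p 0‖ + ‖p e‖ - ‖p 0 + p e * ψ (-e)‖) := by
  classical
  have hsplit : ∀ {A : Type} [AddCommMonoid A] (f : G → A),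
      ∑ x, f x = f 0 + f e + ∑ x ∈ (univ.erase 0).erase e, f x := fun f => by
    rw [add_assoc, add_sum_erase _ _ (by simp [he]), add_sum_erase _ _ (mem_univ 0)]
  have hrest : ‖∑ x ∈ (univ.erase 0).erase e, p x * ψ (-x)‖ ≤
      ∑ x ∈ (univ.erase 0).erase e, ‖p x‖ :=
    norm_sum_le_of_le _ fun x _ => by rw [norm_mul, AddChar.norm_apply, mul_one]
  rw [symbol, hsplit, hsplit (fun x => ‖p x‖), neg_zero, AddChar.map_zero_eq_one, mul_one]
  linarith [norm_add_le (p 0 + p e * ψ (-e)) (∑ x ∈ (univ.erase 0).erase e, p x * ψ (-x))]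

variable [DecidableEq G]

lemma circulant_pow_mulVec_addChar (p : G → ℂ) (k : ℕ) (ψ : AddChar G ℂ) :
    circulant p ^ k *ᵥ ψ = symbol p ψ ^ k • ⇑ψ := by
  induction k with
  | zero => simp
  | succ k ih =>
    rw [pow_succ, ← mulVec_mulVec, circulant_mulVec_addChar, mulVec_smul, ih, smul_smul, pow_succ']

lemma one_sub_meanMatrix_mulVec_addChar (ψ : AddChar G ℂ) [Decidable (ψ = 0)] :
    (1 - meanMatrix G) *ᵥ ψ = if ψ = 0 then 0 else ⇑ψ := by
  ext a
  rw [sub_mulVec, one_mulVec, Pi.sub_apply, meanMatrix_mulVec_apply, AddChar.sum_eq_ite]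
  split_ifs with hψ <;> simp [hψ]

variable {p : G → ℂ} {ρ : ℝ}

lemma norm_one_sub_meanMatrix_mul_circulant_pow_entry_le (hρ₀ : 0 ≤ ρ)
    (hρ : ∀ ψ : AddChar G ℂ, ψ ≠ 0 → ‖symbol p ψ‖ ≤ ρ) (k : ℕ) (a b : G) :
    ‖((1 - meanMatrix G) * circulant p ^ k) a b‖ ≤ ρ ^ k := by
  classical
  refine norm_entry_le_of_mulVec_addChar (fun ψ => ?_) a b
  rw [← mulVec_mulVec, circulant_pow_mulVec_addChar, mulVec_smul,
    one_sub_meanMatrix_mulVec_addChar]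
  by_cases hψ : ψ = 0
  · exact ⟨0, by simpa using pow_nonneg hρ₀ k, by simp [hψ]⟩
  · refine ⟨symbol p ψ ^ k, ?_, by rw [if_neg hψ]⟩
    rw [norm_pow]
    exact pow_le_pow_left₀ (norm_nonneg _) (hρ ψ hψ) k

-- Interpolation between the trivial bound `2`, which does not decay in `k`, and the bound
-- `|G| ρ ^ k` obtained by summing the entries of a row.
lemma norm_one_sub_meanMatrix_mul_circulant_pow_le (hp : ∑ x, ‖p x‖ ≤ 1) (hρ₀ : 0 ≤ ρ)
    (hρ : ∀ ψ : AddChar G ℂ, ψ ≠ 0 → ‖symbol p ψ‖ ≤ ρ) {ε : ℝ} (hε₀ : 0 ≤ ε) (hε₁ : ε ≤ 1)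
    (k : ℕ) :
    ‖(1 - meanMatrix G) * circulant p ^ k‖ ≤ 2 * (Fintype.card G : ℝ) ^ ε * (ρ ^ ε) ^ k := by
  have htrivial : ‖(1 - meanMatrix G) * circulant p ^ k‖ ≤ 2 := by
    have hpow : ‖circulant p ^ k‖ ≤ 1 :=
      (norm_pow_le _ k).trans (pow_le_one₀ (norm_nonneg _) ((norm_circulant_le p).trans hp))
    exact (norm_mul_le _ _).trans <|
      (mul_le_of_le_one_right (norm_nonneg _) hpow).trans norm_one_sub_meanMatrix_le_two
  have hdecay : ‖(1 - meanMatrix G) * circulant p ^ k‖ ≤ Fintype.card G * ρ ^ k := by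
    refine (linfty_opNorm_le_iff (by positivity)).2 fun a => ?_
    refine (sum_le_card_nsmul _ _ _ fun b _ =>
      norm_one_sub_meanMatrix_mul_circulant_pow_entry_le hρ₀ hρ k a b).trans_eq ?_
    rw [card_univ, nsmul_eq_mul]
  calc
    ‖(1 - meanMatrix G) * circulant p ^ k‖ ≤ 2 ^ (1 - ε) * (Fintype.card G * ρ ^ k) ^ ε :=
      le_rpow_one_sub_mul_rpow (norm_nonneg _) htrivial hdecay hε₀ hε₁
    _ ≤ 2 * (Fintype.card G * ρ ^ k) ^ ε := by
      gcongr
      exact Real.rpow_le_self_of_one_le one_le_two (by linarith)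
    _ = 2 * (Fintype.card G : ℝ) ^ ε * (ρ ^ ε) ^ k := by
      rw [Real.mul_rpow (by positivity) (by positivity), Real.rpow_pow_comm hρ₀, mul_assoc]

lemma norm_one_sub_meanMatrix_mul_evolutionFactor_le (hp : ∑ x, ‖p x‖ ≤ 1) {δ : ℝ} (hδ₀ : 0 < δ)
    (hδ₁ : δ ≤ 1) (hδ : ∀ ψ : AddChar G ℂ, ψ ≠ 0 → ‖symbol p ψ‖ ≤ 1 - δ) {ε : ℝ} (hε₀ : 0 < ε)
    (hε₁ : ε ≤ 1) (ζs : ℂ) {ζt : ℂ} (hζ : ‖ζt‖ < 1) :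
    ‖(1 - meanMatrix G) * evolutionFactor (circulant p) ζs ζt‖ ≤
      2 * (Fintype.card G : ℝ) ^ ε * (1 + ‖ζt - ζs‖ / (ε * δ)) := by
  have hρ₀ : 0 ≤ 1 - δ := sub_nonneg.2 hδ₁
  have hbernoulli : (1 - δ) ^ ε ≤ 1 - ε * δ := by
    simpa [sub_eq_add_neg] using
      rpow_one_add_le_one_add_mul_self (s := -δ) (by linarith) hε₀.le hε₁
  have hεδ : 0 < ε * δ := mul_pos hε₀ hδ₀
  refine (norm_mul_evolutionFactor_le ((norm_circulant_le p).trans hp) ζs hζ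
    (Real.rpow_nonneg hρ₀ ε) (by linarith)
    (norm_one_sub_meanMatrix_mul_circulant_pow_le hp hρ₀ hδ hε₀.le hε₁)).trans ?_
  rw [div_eq_mul_inv]
  gcongr
  linarith

lemma norm_meanMatrix_mul_evolutionFactor_le (hp : ∑ x, ‖p x‖ ≤ 1) {ζs ζt : ℂ} (hζs : ‖ζs‖ ≤ 1)
    (hζt : ‖ζt‖ < 1) {c : ℝ} (hc₀ : 0 < c) (hc : c ≤ ‖1 - ζt * ∑ x, p x‖) :
    ‖meanMatrix G * evolutionFactor (circulant p) ζs ζt‖ ≤ 2 / c := by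
  have hne : 1 - ζt * ∑ x, p x ≠ 0 := norm_pos_iff.1 (hc₀.trans_le hc)
  have hnum : ‖1 - ζs * ∑ x, p x‖ ≤ 2 := by
    have hprod : ‖ζs * ∑ x, p x‖ ≤ 1 := by
      rw [norm_mul]
      exact mul_le_one₀ hζs (norm_nonneg _) ((norm_sum_le _ _).trans hp)
    linarith [norm_sub_le 1 (ζs * ∑ x, p x), norm_one (α := ℂ)]
  rw [mul_evolutionFactor_of_mul_eq_smul (meanMatrix_mul_circulant p)
    ((norm_circulant_le p).trans hp) ζs hζt hne, norm_smul, norm_div]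
  exact (mul_le_of_le_one_right (by positivity) norm_meanMatrix_le_one).trans
    (div_le_div₀ zero_le_two hnum hc₀ hc)

end Circulant

section HoppingKernel

variable {d L : ℕ}

lemma torusDist_single_zero (hL : 1 < L) (j : Fin d) :
    torusDist (Pi.single j (1 : ZMod L)) 0 = 1 := by
  have : Fact (1 < L) := ⟨hL⟩
  have hneg : (-1 : ZMod L).val ≠ 0 := by simp
  rw [torusDist, sum_eq_single_of_mem j (mem_univ j) fun i _ hi => by simp [hi]]
  simp only [Pi.single_eq_same, Pi.zero_apply, sub_zero, zero_sub, ZMod.val_one]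
  lia

variable (d L) in
/-- The jump distribution of which `S^(B)` is the circulant matrix: the column of `S^(B)` at `0`. -/
noncomputable def hoppingWeight (lam : ℝ) (x : Fin d → ZMod L) : ℝ :=
  if x = 0 then 1 / (1 + 2 * d * lam ^ 2)
  else if torusDist x 0 = 1 then lam ^ 2 / (1 + 2 * d * lam ^ 2) else 0

lemma hoppingWeight_nonneg (lam : ℝ) (x : Fin d → ZMod L) : 0 ≤ hoppingWeight d L lam x := by
  unfold hoppingWeight
  split_ifs <;> positivity

lemma norm_hoppingWeight (lam : ℝ) (x : Fin d → ZMod L) :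
    ‖(hoppingWeight d L lam x : ℂ)‖ = hoppingWeight d L lam x :=
  Complex.norm_of_nonneg (hoppingWeight_nonneg lam x)

/-- The constant `q` in the spectral gap `q / L²` of `S^(B)`. -/
noncomputable def spectralGap (d : ℕ) (lam : ℝ) : ℝ :=
  lam ^ 2 / (1 + lam ^ 2) / (1 + 2 * d * lam ^ 2) / 2

lemma spectralGap_nonneg (d : ℕ) (lam : ℝ) : 0 ≤ spectralGap d lam := by
  unfold spectralGap
  positivity

lemma spectralGap_le_one (d : ℕ) (lam : ℝ) : spectralGap d lam ≤ 1 := by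
  rw [spectralGap, div_div, div_div, div_le_one (by positivity)]
  have hdegree : 0 ≤ 2 * d * lam ^ 2 := by positivity
  nlinarith [sq_nonneg lam]

lemma exists_pos_le_spectralGap (d : ℕ) {C₀ : ℝ} (hC₀ : 0 < C₀) :
    ∃ q > 0, ∀ lam, C₀⁻¹ ≤ lam → lam ≤ C₀ → q ≤ spectralGap d lam := by
  refine ⟨C₀⁻¹ ^ 2 / (1 + C₀ ^ 2) / (1 + 2 * d * C₀ ^ 2) / 2, by positivity,
    fun lam hlower hupper => ?_⟩
  have hlam : 0 ≤ lam := (inv_pos.2 hC₀).le.trans hlower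
  unfold spectralGap
  gcongr

lemma norm_hoppingWeight_zero_add_mul_le (hL : 1 < L) (lam : ℝ) (j : Fin d) {z : ℂ}
    (hz : ‖z‖ = 1) :
    ‖(hoppingWeight d L lam 0 : ℂ) + hoppingWeight d L lam (Pi.single j 1) * z‖ ≤
      hoppingWeight d L lam 0 + hoppingWeight d L lam (Pi.single j 1) -
        spectralGap d lam * ‖z - 1‖ ^ 2 := by
  have : Fact (1 < L) := ⟨hL⟩
  have hzero : hoppingWeight d L lam 0 = 1 / (1 + 2 * d * lam ^ 2) := if_pos rfl
  have hunit : hoppingWeight d L lam (Pi.single j 1) = lam ^ 2 / (1 + 2 * d * lam ^ 2) := by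
    rw [hoppingWeight, if_neg (by simp), if_pos (torusDist_single_zero hL j)]
  have hgap : spectralGap d lam = 1 / (1 + 2 * d * lam ^ 2) * (lam ^ 2 / (1 + 2 * d * lam ^ 2)) /
      (1 / (1 + 2 * d * lam ^ 2) + lam ^ 2 / (1 + 2 * d * lam ^ 2)) / 2 := by
    unfold spectralGap
    field_simp
  rw [hzero, hunit, hgap]
  exact norm_add_mul_le_of_norm_eq_one (by positivity) (by positivity) hz

lemma addChar_apply_pow_eq_one (ψ : AddChar (Fin d → ZMod L) ℂ) (x : Fin d → ZMod L) :
    ψ x ^ L = 1 := by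
  have hx : L • x = 0 := by ext; simp
  rw [← AddChar.map_nsmul_eq_pow, hx, AddChar.map_zero_eq_one]

variable [NeZero L]

lemma torusDist_zero_eq_sum_natAbs (x : Fin d → ZMod L) :
    torusDist x 0 = ∑ i, (x i).valMinAbs.natAbs := by
  refine sum_congr rfl fun i _ => ?_
  rw [Pi.zero_apply, sub_zero, zero_sub, ZMod.valMinAbs_natAbs_eq_min, ZMod.neg_val]
  split_ifs with hx <;> simp [hx]

lemma eq_single_of_torusDist_zero_eq_one {x : Fin d → ZMod L} (hx : torusDist x 0 = 1) :
    ∃ j, x = Pi.single j 1 ∨ x = Pi.single j (-1) := by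
  rw [torusDist_zero_eq_sum_natAbs] at hx
  obtain ⟨j, -, hj⟩ := exists_ne_zero_of_sum_ne_zero (hx.trans_ne one_ne_zero)
  rw [← add_sum_erase _ _ (mem_univ j)] at hx
  have hother : ∀ i ≠ j, x i = 0 := fun i hi => by
    have hsum : ∑ i ∈ univ.erase j, (x i).valMinAbs.natAbs = 0 := by lia
    simpa using sum_eq_zero_iff.1 hsum i (mem_erase.2 ⟨hi, mem_univ i⟩)
  have hx_single : x = Pi.single j (x j) := by
    ext i
    obtain rfl | hi := eq_or_ne i j
    · rw [Pi.single_eq_same]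
    · rw [Pi.single_eq_of_ne hi, hother i hi]
  have hval : (x j).valMinAbs = 1 ∨ (x j).valMinAbs = -1 := by lia
  have hcoord : x j = 1 ∨ x j = -1 := hval.imp
    (fun h => by rw [← ZMod.coe_valMinAbs (x j), h, Int.cast_one])
    fun h => by rw [← ZMod.coe_valMinAbs (x j), h, Int.cast_neg, Int.cast_one]
  exact ⟨j, hcoord.imp (hx_single.trans <| congrArg (Pi.single j) ·)
    (hx_single.trans <| congrArg (Pi.single j) ·)⟩

lemma card_torusDist_zero_eq_one_le :
    #{x : Fin d → ZMod L | torusDist x 0 = 1} ≤ 2 * d := by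
  have hsub : ({x | torusDist x 0 = 1} : Finset (Fin d → ZMod L)) ⊆
      univ.image (fun j => Pi.single j 1) ∪ univ.image fun j => Pi.single j (-1) := fun x hx => by
    obtain ⟨j, hj⟩ := eq_single_of_torusDist_zero_eq_one (mem_filter.1 hx).2
    simpa only [mem_union, mem_image_univ_iff_mem_range] using
      hj.imp (fun h => ⟨j, h.symm⟩) fun h => ⟨j, h.symm⟩
  refine (card_le_card hsub).trans ((card_union_le _ _).trans ?_)
  rw [two_mul]
  gcongr <;> simpa using card_image_le (s := univ (α := Fin d))

lemma SBmat_eq_circulant (lam : ℝ) :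
    SBmat d L lam = circulant fun x => (hoppingWeight d L lam x : ℂ) := by
  ext a b
  have hdist : torusDist (a - b) 0 = torusDist a b := by simp [torusDist]
  simp only [SBmat, of_apply, circulant_apply, hoppingWeight, sub_eq_zero, hdist]
  split_ifs <;> simp

-- Only an inequality: for `L = 2` the two neighbours in each direction coincide.
lemma sum_hoppingWeight_le_one (lam : ℝ) : ∑ x, hoppingWeight d L lam x ≤ 1 := by
  have hsplit : ∀ x, hoppingWeight d L lam x ≤ (if x = 0 then 1 / (1 + 2 * d * lam ^ 2) else 0) +
      if torusDist x 0 = 1 then lam ^ 2 / (1 + 2 * d * lam ^ 2) else 0 := fun x => by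
    have hneighbour : 0 ≤ lam ^ 2 / (1 + 2 * d * lam ^ 2) := by positivity
    unfold hoppingWeight
    split_ifs <;> linarith
  calc
    ∑ x, hoppingWeight d L lam x ≤ 1 / (1 + 2 * d * lam ^ 2) +
        #{x : Fin d → ZMod L | torusDist x 0 = 1} * (lam ^ 2 / (1 + 2 * d * lam ^ 2)) := by
      refine (sum_le_sum fun x _ => hsplit x).trans_eq ?_
      simp [sum_add_distrib, sum_ite]
    _ ≤ 1 / (1 + 2 * d * lam ^ 2) + (2 * d : ℕ) * (lam ^ 2 / (1 + 2 * d * lam ^ 2)) := by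
      gcongr
      exact card_torusDist_zero_eq_one_le
    _ = 1 := by
      push_cast
      field_simp

lemma sum_norm_hoppingWeight_le_one (lam : ℝ) :
    ∑ x : Fin d → ZMod L, ‖(hoppingWeight d L lam x : ℂ)‖ ≤ 1 := by
  simpa only [norm_hoppingWeight] using sum_hoppingWeight_le_one lam

lemma exists_map_neg_single_ne_one {ψ : AddChar (Fin d → ZMod L) ℂ} (hψ : ψ ≠ 0) :
    ∃ j, ψ (-Pi.single j 1) ≠ 1 := by
  by_contra! hsingle
  refine hψ (AddChar.toAddMonoidHomEquiv.injective
    (AddMonoidHom.functions_ext' _ _ _ fun j => AddMonoidHom.ext fun u => ?_))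
  have hmultiple : (Pi.single j u : Fin d → ZMod L) = (-u).val • -Pi.single j 1 := by
    rw [← Pi.single_neg, ← Pi.single_smul]
    simp
  change ψ (Pi.single j u) = 1
  rw [hmultiple, AddChar.map_nsmul_eq_pow, hsingle, one_pow]

lemma norm_symbol_hoppingWeight_le (lam : ℝ) {ψ : AddChar (Fin d → ZMod L) ℂ} (hψ : ψ ≠ 0) :
    ‖symbol (fun x => (hoppingWeight d L lam x : ℂ)) ψ‖ ≤ 1 - spectralGap d lam / L ^ 2 := by
  obtain ⟨j, hj⟩ := exists_map_neg_single_ne_one hψ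
  have hroot : ψ (-Pi.single j 1) ^ L = 1 := addChar_apply_pow_eq_one ψ _
  have hL : 1 < L := by
    refine Nat.one_lt_iff_ne_zero_and_ne_one.2 ⟨NeZero.ne L, fun h => ?_⟩
    subst h
    exact hj ((pow_one _).symm.trans hroot)
  have : Fact (1 < L) := ⟨hL⟩
  have hsep : 1 / (L : ℝ) ^ 2 ≤ ‖ψ (-Pi.single j 1) - 1‖ ^ 2 := by
    rw [div_le_iff₀ (by positivity), mul_comm, ← mul_pow]
    exact one_le_pow₀ (one_le_mul_norm_sub_one_of_pow_eq_one hroot hj)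
  have hgain := mul_le_mul_of_nonneg_left hsep (spectralGap_nonneg d lam)
  have hpair := norm_hoppingWeight_zero_add_mul_le hL lam j (AddChar.norm_apply ψ (-Pi.single j 1))
  have hsymbol := norm_symbol_le (fun x => (hoppingWeight d L lam x : ℂ)) ψ
    (e := Pi.single j 1) (by simp)
  simp only [norm_hoppingWeight] at hsymbol
  rw [div_eq_mul_one_div]
  linarith [sum_hoppingWeight_le_one (d := d) (L := L) lam]

end HoppingKernel

section Energy

variable {E : ℝ}

lemma mSC_re (E : ℝ) : (mSC E).re = -E / 2 := by
  simp [mSC]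

lemma mSC_im (E : ℝ) : (mSC E).im = √(4 - E ^ 2) / 2 := by
  simp [mSC]

lemma norm_mSign (hE : E ^ 2 ≤ 4) (b : Bool) : ‖mSign E b‖ = 1 := by
  have hsq : ‖mSC E‖ ^ 2 = 1 := by
    rw [Complex.sq_norm, Complex.normSq_apply, mSC_re, mSC_im]
    linear_combination Real.mul_self_sqrt (sub_nonneg.2 hE) / 4
  have hnorm : ‖mSC E‖ = 1 := (pow_eq_one_iff_of_nonneg (norm_nonneg _) two_ne_zero).1 hsq
  cases b <;> simp [mSign, hnorm]

lemma abs_im_mSign (E : ℝ) (b : Bool) : |(mSign E b).im| = √(4 - E ^ 2) / 2 := by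
  have hnonneg : 0 ≤ √(4 - E ^ 2) / 2 := by positivity
  cases b <;> simp [mSign, mSC_im, abs_of_nonneg hnonneg]

lemma abs_im_le_norm_one_sub_mul_mul {m : ℂ} (hm : ‖m‖ = 1) {x : ℝ} (hx : 0 ≤ x) :
    |m.im| ≤ ‖1 - x * m * m‖ := by
  have hconj : starRingEnd ℂ m * m = 1 := by
    rw [mul_comm, Complex.mul_conj, Complex.normSq_eq_norm_sq, hm]
    simp
  calc
    |m.im| ≤ (1 + x) * |m.im| := le_mul_of_one_le_left (abs_nonneg _) (by linarith)
    _ = |(starRingEnd ℂ m - x * m).im| := by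
      rw [← abs_of_nonneg (show 0 ≤ 1 + x by linarith), ← abs_mul, ← abs_neg]
      congr 1
      simp
      ring
    _ ≤ ‖starRingEnd ℂ m - x * m‖ := Complex.abs_im_le_norm _
    _ = ‖1 - x * m * m‖ := by
      rw [← mul_one ‖starRingEnd ℂ m - x * m‖, ← hm, ← norm_mul]
      congr 1
      linear_combination hconj

lemma norm_ofReal_mul_mSign_mul_mSign (hE : E ^ 2 ≤ 4) (x : ℝ) (b b' : Bool) :
    ‖(x : ℂ) * mSign E b * mSign E b'‖ = |x| := by
  rw [norm_mul, norm_mul, norm_mSign hE, norm_mSign hE, mul_one, mul_one, Complex.norm_real,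
    Real.norm_eq_abs]

variable {κ : ℝ}

lemma two_mul_le_four_sub_sq (hκ : 0 ≤ κ) (hE : |E| ≤ 2 - κ) : 2 * κ ≤ 4 - E ^ 2 := by
  rw [← sq_abs]
  nlinarith [abs_nonneg E]

lemma sqrt_half_le_norm_one_sub_mSign (hκ : 0 ≤ κ) (hE : |E| ≤ 2 - κ) {x : ℝ} (hx : 0 ≤ x)
    (b : Bool) : √(2 * κ) / 2 ≤ ‖1 - x * mSign E b * mSign E b‖ := by
  have hgap := two_mul_le_four_sub_sq hκ hE
  refine le_trans ?_ (abs_im_le_norm_one_sub_mul_mul (norm_mSign (by linarith) b) hx)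
  rw [abs_im_mSign]
  gcongr

end Energy

section Tensor

variable {ι α : Type*} [Fintype ι] [DecidableEq ι] [Fintype α]

/-- The action of the tensor product of the matrices `M i` on a tensor `A`. -/
def tensorOp (M : ι → Matrix α α ℂ) (A : (ι → α) → ℂ) (a : ι → α) : ℂ :=
  ∑ b : ι → α, (∏ i, M i (a i) (b i)) * A b

lemma norm_tensorOp_le {M : ι → Matrix α α ℂ} {B : ℝ} (hM : ∀ i, ‖M i‖ ≤ B)
    (A : (ι → α) → ℂ) (a : ι → α) : ‖tensorOp M A a‖ ≤ B ^ Fintype.card ι * ⨆ b, ‖A b‖ := by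
  have hA : ∀ b, ‖A b‖ ≤ ⨆ b, ‖A b‖ := le_ciSup (Set.finite_range _).bddAbove
  calc
    ‖tensorOp M A a‖ ≤ ∑ b : ι → α, (∏ i, ‖M i (a i) (b i)‖) * ⨆ b, ‖A b‖ :=
      norm_sum_le_of_le _ fun b _ => by
        rw [norm_mul, norm_prod]
        exact mul_le_mul_of_nonneg_left (hA b) (prod_nonneg fun i _ => norm_nonneg _)
    _ = (∏ i, ∑ c, ‖M i (a i) c‖) * ⨆ b, ‖A b‖ := by rw [← sum_mul, Fintype.prod_sum]
    _ ≤ (∏ _i : ι, B) * ⨆ b, ‖A b‖ := by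
      refine mul_le_mul_of_nonneg_right (prod_le_prod (fun i _ => by positivity) fun i _ => ?_)
        (Real.iSup_nonneg fun b => norm_nonneg (A b))
      exact (sum_norm_row_le (M i) (a i)).trans (hM i)
    _ = B ^ Fintype.card ι * ⨆ b, ‖A b‖ := by rw [prod_const, card_univ]

lemma tensorOp_update_mul (M : ι → Matrix α α ℂ) (i : ι) (N : Matrix α α ℂ) (A : (ι → α) → ℂ)
    (a : ι → α) :
    tensorOp (Function.update M i (N * M i)) A a =
      ∑ c, N (a i) c * tensorOp M A (Function.update a i c) := by
  have hprod : ∀ (M' : ι → Matrix α α ℂ) (a' b : ι → α),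
      (∀ j ≠ i, M' j (a' j) (b j) = M j (a j) (b j)) → ∏ j, M' j (a' j) (b j) =
        M' i (a' i) (b i) * ∏ j ∈ univ.erase i, M j (a j) (b j) := fun M' a' b hagree => by
    rw [← mul_prod_erase _ _ (mem_univ i)]
    exact congrArg _ (prod_congr rfl fun j hj => hagree j (ne_of_mem_erase hj))
  simp only [tensorOp, mul_sum]
  rw [sum_comm]
  refine sum_congr rfl fun b _ => ?_
  rw [hprod _ a b fun j hj => by rw [Function.update_of_ne hj], Function.update_self, mul_apply,
    sum_mul, sum_mul]
  refine sum_congr rfl fun c _ => ?_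
  rw [hprod M (Function.update a i c) b fun j hj => by rw [Function.update_of_ne hj],
    Function.update_self]
  ring

variable {d L n : ℕ} [NeZero L]

lemma Qrem_tensorOp (M : Fin n → Matrix (Fin d → ZMod L) (Fin d → ZMod L) ℂ) (i : Fin n)
    (A : (Fin n → Fin d → ZMod L) → ℂ) :
    Qrem d L n i (tensorOp M A) =
      tensorOp (Function.update M i ((1 - meanMatrix (Fin d → ZMod L)) * M i)) A := by
  ext a
  rw [tensorOp_update_mul]
  simp [Qrem, Pavg, meanMatrix, sub_mul, sum_sub_distrib, one_apply, mul_sum]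

lemma foldr_Qrem_tensorOp (M : Fin n → Matrix (Fin d → ZMod L) (Fin d → ZMod L) ℂ)
    (A : (Fin n → Fin d → ZMod L) → ℂ) {l : List (Fin n)} (hl : l.Nodup) :
    l.foldr (fun i acc => Qrem d L n i acc) (tensorOp M A) =
      tensorOp (fun i => if i ∈ l then (1 - meanMatrix (Fin d → ZMod L)) * M i else M i) A := by
  induction l with
  | nil => simp
  | cons j l ih =>
    obtain ⟨hj, hl⟩ := List.nodup_cons.1 hl
    rw [List.foldr_cons, ih hl, Qrem_tensorOp]
    congr 1
    ext1 i
    obtain rfl | hi := eq_or_ne i j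
    · simp [hj]
    · simp [hi]

lemma QremSet_tensorOp (M : Fin n → Matrix (Fin d → ZMod L) (Fin d → ZMod L) ℂ)
    (J : Finset (Fin n)) (A : (Fin n → Fin d → ZMod L) → ℂ) :
    QremSet d L n J (tensorOp M A) =
      tensorOp (fun i => if i ∈ J then (1 - meanMatrix (Fin d → ZMod L)) * M i else M i) A := by
  rw [QremSet, foldr_Qrem_tensorOp M A (sort_nodup J (· ≤ ·))]
  simp only [mem_sort]

variable (d L) in
/-- The factor of the evolution kernel at a loop index whose two adjacent charges are `b`, `b'`. -/
noncomputable def siteFactor (lam E s t : ℝ) (b b' : Bool) :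
    Matrix (Fin d → ZMod L) (Fin d → ZMod L) ℂ :=
  evolutionFactor (SBmat d L lam) (s * mSign E b * mSign E b') (t * mSign E b * mSign E b')

lemma Ukernel_eq_tensorOp [NeZero n] (lam E s t : ℝ) (σ : Fin n → Bool)
    (A : (Fin n → Fin d → ZMod L) → ℂ) :
    Ukernel d L lam E s t n σ A =
      tensorOp (fun i => siteFactor d L lam E s t (σ i) (σ (i + 1))) A :=
  rfl

end Tensor

section SiteBounds

variable {d L : ℕ} [NeZero L] {lam q ε : ℝ}

lemma norm_one_sub_meanMatrix_mul_evolutionFactor_SBmat_le (hq₀ : 0 < q)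
    (hq : q ≤ spectralGap d lam) (hε₀ : 0 < ε) (hε₁ : ε ≤ 1) {ζs ζt : ℂ} (hζ : ‖ζt‖ < 1)
    (hdiff : ‖ζt - ζs‖ ≤ ((L : ℝ) ^ 2)⁻¹) :
    ‖(1 - meanMatrix (Fin d → ZMod L)) * evolutionFactor (SBmat d L lam) ζs ζt‖ ≤
      2 * (1 + 1 / (ε * q)) * ((L : ℝ) ^ d) ^ ε := by
  have hL : (1 : ℝ) ≤ L := mod_cast NeZero.one_le
  have hgap₀ : 0 < q / (L : ℝ) ^ 2 := by positivity
  have hgap₁ : q / (L : ℝ) ^ 2 ≤ 1 :=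
    div_le_one_of_le₀ ((hq.trans (spectralGap_le_one d lam)).trans (one_le_pow₀ hL)) (by positivity)
  have hgap : ∀ ψ : AddChar (Fin d → ZMod L) ℂ, ψ ≠ 0 →
      ‖symbol (fun x => (hoppingWeight d L lam x : ℂ)) ψ‖ ≤ 1 - q / (L : ℝ) ^ 2 := fun ψ hψ =>
    (norm_symbol_hoppingWeight_le lam hψ).trans (by gcongr)
  rw [SBmat_eq_circulant]
  calc
    _ ≤ 2 * (Fintype.card (Fin d → ZMod L) : ℝ) ^ ε *
        (1 + ‖ζt - ζs‖ / (ε * (q / (L : ℝ) ^ 2))) :=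
      norm_one_sub_meanMatrix_mul_evolutionFactor_le (sum_norm_hoppingWeight_le_one lam) hgap₀
        hgap₁ hgap hε₀ hε₁ ζs hζ
    _ ≤ 2 * (Fintype.card (Fin d → ZMod L) : ℝ) ^ ε *
        (1 + ((L : ℝ) ^ 2)⁻¹ / (ε * (q / (L : ℝ) ^ 2))) := by gcongr
    _ = 2 * (1 + 1 / (ε * q)) * ((L : ℝ) ^ d) ^ ε := by
      rw [Fintype.card_fun, ZMod.card, Fintype.card_fin]
      push_cast
      field_simp

lemma norm_evolutionFactor_SBmat_le (hq₀ : 0 < q) (hq : q ≤ spectralGap d lam) (hε₀ : 0 < ε)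
    (hε₁ : ε ≤ 1) {ζs ζt : ℂ} (hζs : ‖ζs‖ ≤ 1) (hζt : ‖ζt‖ < 1)
    (hdiff : ‖ζt - ζs‖ ≤ ((L : ℝ) ^ 2)⁻¹) {c : ℝ} (hc₀ : 0 < c)
    (hc : c ≤ ‖1 - ζt * ∑ x : Fin d → ZMod L, (hoppingWeight d L lam x : ℂ)‖) :
    ‖evolutionFactor (SBmat d L lam) ζs ζt‖ ≤
      (2 * (1 + 1 / (ε * q)) + 2 / c) * ((L : ℝ) ^ d) ^ ε := by
  have hvolume : 1 ≤ ((L : ℝ) ^ d) ^ ε :=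
    Real.one_le_rpow (one_le_pow₀ (mod_cast NeZero.one_le)) hε₀.le
  have hfluct := norm_one_sub_meanMatrix_mul_evolutionFactor_SBmat_le hq₀ hq hε₀ hε₁ hζt hdiff
  have hmean : ‖meanMatrix (Fin d → ZMod L) * evolutionFactor (SBmat d L lam) ζs ζt‖ ≤ 2 / c := by
    rw [SBmat_eq_circulant]
    exact norm_meanMatrix_mul_evolutionFactor_le (sum_norm_hoppingWeight_le_one lam) hζs hζt hc₀ hc
  calc
    ‖evolutionFactor (SBmat d L lam) ζs ζt‖ ≤
        ‖(1 - meanMatrix (Fin d → ZMod L)) * evolutionFactor (SBmat d L lam) ζs ζt‖ +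
          ‖meanMatrix (Fin d → ZMod L) * evolutionFactor (SBmat d L lam) ζs ζt‖ := by
      refine le_of_eq_of_le (congrArg norm ?_) (norm_add_le _ _)
      rw [← add_mul, sub_add_cancel, one_mul]
    _ ≤ 2 * (1 + 1 / (ε * q)) * ((L : ℝ) ^ d) ^ ε + 2 / c * ((L : ℝ) ^ d) ^ ε :=
      add_le_add hfluct (hmean.trans (le_mul_of_one_le_right (by positivity) hvolume))
    _ = (2 * (1 + 1 / (ε * q)) + 2 / c) * ((L : ℝ) ^ d) ^ ε := by ring

variable {E κ s t : ℝ}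

lemma norm_ite_siteFactor_le (hq₀ : 0 < q) (hq : q ≤ spectralGap d lam) (hε₀ : 0 < ε)
    (hε₁ : ε ≤ 1) (hκ : 0 < κ) (hE : |E| ≤ 2 - κ) (hs : 0 ≤ s) (hst : s ≤ t) (ht : t < 1)
    (hts : t - s ≤ ((L : ℝ) ^ 2)⁻¹) {b b' : Bool} {p : Prop} [Decidable p] (hp : b ≠ b' → p) :
    ‖if p then (1 - meanMatrix (Fin d → ZMod L)) * siteFactor d L lam E s t b b'
      else siteFactor d L lam E s t b b'‖ ≤
      (2 * (1 + 1 / (ε * q)) + 2 / (√(2 * κ) / 2)) * ((L : ℝ) ^ d) ^ ε := by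
  have hE_sq : E ^ 2 ≤ 4 := by linarith [two_mul_le_four_sub_sq hκ.le hE]
  have hζs : ‖(s : ℂ) * mSign E b * mSign E b'‖ ≤ 1 := by
    rw [norm_ofReal_mul_mSign_mul_mSign hE_sq, abs_of_nonneg hs]
    linarith
  have hζt : ‖(t : ℂ) * mSign E b * mSign E b'‖ < 1 := by
    rwa [norm_ofReal_mul_mSign_mul_mSign hE_sq, abs_of_nonneg (hs.trans hst)]
  have hdiff : ‖(t : ℂ) * mSign E b * mSign E b' - s * mSign E b * mSign E b'‖ ≤
      ((L : ℝ) ^ 2)⁻¹ := by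
    rwa [← sub_mul, ← sub_mul, ← Complex.ofReal_sub, norm_ofReal_mul_mSign_mul_mSign hE_sq,
      abs_of_nonneg (sub_nonneg.2 hst)]
  split_ifs with hremoved
  · refine (norm_one_sub_meanMatrix_mul_evolutionFactor_SBmat_le hq₀ hq hε₀ hε₁ hζt hdiff).trans ?_
    gcongr
    exact le_add_of_nonneg_right (by positivity)
  · obtain rfl : b = b' := not_not.1 (mt hp hremoved)
    refine norm_evolutionFactor_SBmat_le hq₀ hq hε₀ hε₁ hζs hζt hdiff (by positivity) ?_
    have hmass : 0 ≤ t * ∑ x, hoppingWeight d L lam x :=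
      mul_nonneg (hs.trans hst) (sum_nonneg fun x _ => hoppingWeight_nonneg lam x)
    convert sqrt_half_le_norm_one_sub_mSign hκ.le hE hmass b using 3
    push_cast
    ring

lemma nonneg_of_one_sub_inv_sq_le (hs : 1 - ((L : ℝ) ^ 2)⁻¹ ≤ s) : 0 ≤ s :=
  (sub_nonneg.2 (inv_le_one_of_one_le₀ (one_le_pow₀ (mod_cast NeZero.one_le)))).trans hs

end SiteBounds

end EvolutionKernel

open EvolutionKernel in
theorem evolution_kernel_zero_mode_removed_general (n d : ℕ) [NeZero n] (C₀ κ τ : ℝ)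
    (hC₀ : 0 < C₀) (hκ : 0 < κ) (hτ : 0 < τ) :
    ∃ C : ℝ, 0 < C ∧
      ∀ (L : ℕ) [NeZero L], ∀ lam : ℝ, C₀⁻¹ ≤ lam → lam ≤ C₀ →
        ∀ E : ℝ, |E| ≤ 2 - κ →
          ∀ σ : Fin n → Bool,
            ∀ s t : ℝ, 0 ≤ s → s ≤ t → t < 1 → t - s ≤ ((L : ℝ) ^ 2)⁻¹ →
              ∀ J : Finset (Fin n),
                (Finset.univ.filter fun i : Fin n => σ i ≠ σ (i + 1)) ⊆ J →
                ∀ (A : (Fin n → Fin d → ZMod L) → ℂ) (a : Fin n → Fin d → ZMod L),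
                  ‖QremSet d L n J (Ukernel d L lam E s t n σ A) a‖ ≤
                    C * (L : ℝ) ^ τ * (⨆ b : Fin n → Fin d → ZMod L, ‖A b‖) := by
  obtain ⟨q, hq₀, hq⟩ := exists_pos_le_spectralGap d hC₀
  obtain ⟨ε, hε₀, hε₁, hε⟩ := exists_pos_le_one_mul_le (N := n * d) (by positivity) hτ
  refine ⟨(2 * (1 + 1 / (ε * q)) + 2 / (√(2 * κ) / 2)) ^ n, by positivity, ?_⟩
  intro L _ lam hlower hupper E hE σ s t hs hst ht hts J hJ A a
  have hsite (i : Fin n) := norm_ite_siteFactor_le hq₀ (hq lam hlower hupper) hε₀ hε₁ hκ hE hs hst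
    ht hts (p := i ∈ J) fun hi => hJ (Finset.mem_filter.2 ⟨Finset.mem_univ i, hi⟩)
  rw [Ukernel_eq_tensorOp, QremSet_tensorOp]
  refine (norm_tensorOp_le hsite A a).trans ?_
  rw [Fintype.card_fin]
  gcongr
  · exact Real.iSup_nonneg fun b => norm_nonneg (A b)
  · exact mul_rpow_pow_le (by positivity) (mod_cast NeZero.one_le) hε

/-- **Evolution kernel estimate with zero modes removed (Lemma A.2).**
For `1 − L^{−2} ≤ s ≤ t < 1` and any `J ⊇ I_diff(σ) = {i : σ_i ≠ σ_{i+1}}`, for every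
`τ > 0` there is a constant `C > 0`, depending only on `n, d, C₀, κ, τ`, such that
`‖Q^(J) ∘ U^{(n)}_{s,t,σ} ∘ 𝒜‖_∞ ≤ C·L^τ·‖𝒜‖_∞`. -/
theorem evolution_kernel_zero_mode_removed (n d : ℕ) [NeZero n] (hn : 2 ≤ n) (hd : 3 ≤ d)
    (C₀ κ τ : ℝ) (hC₀ : 1 ≤ C₀) (hκ0 : 0 < κ) (hκ1 : κ < 1) (hτ : 0 < τ) :
    ∃ C : ℝ, 0 < C ∧
      ∀ (L : ℕ) [NeZero L], 2 ≤ L →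
        ∀ lam : ℝ, C₀⁻¹ ≤ lam → lam ≤ C₀ →
          ∀ E : ℝ, |E| ≤ 2 - κ →
            ∀ σ : Fin n → Bool,
              ∀ s t : ℝ, 1 - ((L : ℝ) ^ 2)⁻¹ ≤ s → s ≤ t → t < 1 →
                ∀ J : Finset (Fin n),
                  (Finset.univ.filter fun i : Fin n => σ i ≠ σ (i + 1)) ⊆ J →
                  ∀ (A : (Fin n → Fin d → ZMod L) → ℂ) (a : Fin n → Fin d → ZMod L),
                    ‖QremSet d L n J (Ukernel d L lam E s t n σ A) a‖ ≤
                      C * (L : ℝ) ^ τ * (⨆ b : Fin n → Fin d → ZMod L, ‖A b‖) := by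
  obtain ⟨C, hC, hbound⟩ :=
    evolution_kernel_zero_mode_removed_general n d C₀ κ τ (zero_lt_one.trans_le hC₀) hκ0 hτ
  exact ⟨C, hC, fun L _ _ lam hlower hupper E hE σ s t hs hst ht => hbound L lam hlower hupper E hE
    σ s t (EvolutionKernel.nonneg_of_one_sub_inv_sq_le hs) hst ht (by linarith)⟩
end
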